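/- arXiv:2301.00085 — 3 statements merged into one kernel-verified Lean document; each statement's English description precedes it below -/
import Mathlib

section
/- For every integer r ≥ 3 and every ε > 0 there exists d₀ = d₀(r, ε) such that for every fixed real d ≥ d₀ the following holds. Set a := (1 + ε/2)·(r log d/((r−1)d))^{1/(r−1)}, κ_j := (10d/r)·C(r,j)·a^j for 1 ≤ j ≤ r−1, and p = p(n) := d(r−1)!/n^{r−1}. Then with probability 1 − o(1/n) (i.e., n times the failure probability tends to 0 as n → ∞), the binomial random hypergraph H_r(n,p) admits a proper coloring using at most (1 + ε/2)·((r−1)d/(r log d))^{1/(r−1)} colors such that for every color class A and every integer j with 1 ≤ j ≤ r−1, the number of hyperedges having exactly j vertices in A is at most κ_j·n. -/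
open Finset Filter Real

open scoped Classical

/-- All `r`-element subsets of `Fin n`, i.e. the potential hyperedges. -/
noncomputable def edgeCandidates (n r : ℕ) : Finset (Finset (Fin n)) :=
  Finset.univ.filter (fun e : Finset (Fin n) => e.card = r)

/-- The probability that the binomial random `r`-uniform hypergraph `H_r(n,p)`
(each of the `C(n,r)` possible hyperedges included independently with probability `p`)
satisfies the property `P` of its edge set. -/
noncomputable def binomProb (n r : ℕ) (p : ℝ) (P : Finset (Finset (Fin n)) → Prop) : ℝ :=
  ∑ E ∈ (edgeCandidates n r).powerset,
    if P E then p ^ E.card * (1 - p) ^ ((edgeCandidates n r).card - E.card) else 0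

/-- A coloring `c` of the vertices is proper for the hypergraph with edge set `E`
if no edge has all its vertices of the same color. -/
def ProperColoring {n k : ℕ} (E : Finset (Finset (Fin n))) (c : Fin n → Fin k) : Prop :=
  ∀ e ∈ E, ∃ v ∈ e, ∃ w ∈ e, c v ≠ c w

/-- The chromatic number of the hypergraph with edge set `E`. -/
noncomputable def chromaticNumber {n : ℕ} (E : Finset (Finset (Fin n))) : ℕ :=
  sInf {k : ℕ | ∃ c : Fin n → Fin k, ProperColoring E c}

/-- `E` admits a proper coloring with at most `kmax` colors such that for every color class
`A` and every `j` with `1 ≤ j ≤ r−1`, the number of hyperedges having exactly `j` vertices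
in `A` is at most `κ j · n`. -/
def HasGoodColoring {n : ℕ} (r : ℕ) (kmax : ℝ) (κ : ℕ → ℝ)
    (E : Finset (Finset (Fin n))) : Prop :=
  ∃ k : ℕ, (k : ℝ) ≤ kmax ∧ ∃ c : Fin n → Fin k, ProperColoring E c ∧
    ∀ i : Fin k, ∀ j : ℕ, 1 ≤ j → j ≤ r - 1 →
      ((E.filter (fun e => (e.filter (fun v => c v = i)).card = j)).card : ℝ) ≤ κ j * n

/-!
Let `k` be slightly larger than `((r - 1) d / (r log d)) ^ (1 / (r - 1))`, and let `X` count the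
proper colorings with `k` colors in which no class exceeds the average size by more than a constant
factor, each weighted by the inverse of the probability that it is proper. A pair of colorings is a
coloring with `k ^ 2` colors, and by the choice of `k` its contribution to the second moment is, up
to a factor `exp (ρ n)` with small `ρ`, the likelihood of that coloring under its own empirical
distribution. Since there are only polynomially many types of colorings, the second moment method
yields a balanced proper coloring with probability at least `exp (-ρ n)`.

This is boosted by bounded differences: the least number of vertices whose deletion leaves a
hypergraph with such a coloring vanishes with probability at least `exp (-ρ n)`, and is therefore at
most `2 √(2ρ) n ≤ (log k / k) n` with probability at least `1 - exp (-ρ n)`. Small vertex sets span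
so few edges that the deleted vertices can be colored greedily with polylogarithmically many, hence
`o(k)`, new colors. Finally, a Chernoff bound and a union bound over all vertex sets of size at most
`a n` control the numbers of edges that meet a color class in exactly `j` vertices.
-/

/-! ### Random subsets -/

section RandomSubset

variable {α : Type*} {p : ℝ} {U : Finset α}

/-- The probability that the random subset of `U` which contains each element of `U` independently
with probability `p` equals `E`. -/
noncomputable def subsetWeight (p : ℝ) (U E : Finset α) : ℝ :=
  p ^ #E * (1 - p) ^ (#U - #E)

/-- The expectation of `F` over the random subset of `U` which contains each element of `U`
independently with probability `p`, written as a finite sum. -/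
noncomputable def subsetExpect (p : ℝ) (U : Finset α) (F : Finset α → ℝ) : ℝ :=
  ∑ E ∈ U.powerset, subsetWeight p U E * F E

/-- The probability that the random subset of `U` which contains each element of `U` independently
with probability `p` has the property `P`. -/
noncomputable def subsetProb (p : ℝ) (U : Finset α) (P : Finset α → Prop) : ℝ :=
  subsetExpect p U fun E ↦ if P E then 1 else 0

lemma subsetWeight_nonneg (hp : p ∈ Set.Icc (0 : ℝ) 1) (E : Finset α) :
    0 ≤ subsetWeight p U E :=
  mul_nonneg (pow_nonneg hp.1 _) (pow_nonneg (sub_nonneg.2 hp.2) _)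

lemma sum_subsetWeight : ∑ E ∈ U.powerset, subsetWeight p U E = 1 := by
  simp only [subsetWeight, sum_pow_mul_eq_add_pow, add_sub_cancel, one_pow]

lemma subsetExpect_add (F G : Finset α → ℝ) :
    subsetExpect p U (fun E ↦ F E + G E) = subsetExpect p U F + subsetExpect p U G := by
  simp only [subsetExpect, mul_add, sum_add_distrib]

lemma subsetExpect_const_mul (a : ℝ) (F : Finset α → ℝ) :
    subsetExpect p U (fun E ↦ a * F E) = a * subsetExpect p U F := by
  simp only [subsetExpect, mul_sum, mul_left_comm]

lemma subsetExpect_sum {ι : Type*} (s : Finset ι) (F : ι → Finset α → ℝ) :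
    subsetExpect p U (fun E ↦ ∑ i ∈ s, F i E) = ∑ i ∈ s, subsetExpect p U (F i) := by
  simp only [subsetExpect, mul_sum]
  exact sum_comm

lemma subsetExpect_const (a : ℝ) : subsetExpect p U (fun _ ↦ a) = a := by
  rw [subsetExpect, ← sum_mul, sum_subsetWeight, one_mul]

lemma subsetExpect_empty (F : Finset α → ℝ) : subsetExpect p ∅ F = F ∅ := by
  simp [subsetExpect, subsetWeight]

lemma subsetExpect_mono (hp : p ∈ Set.Icc (0 : ℝ) 1) {F G : Finset α → ℝ}
    (h : ∀ E ⊆ U, F E ≤ G E) : subsetExpect p U F ≤ subsetExpect p U G :=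
  sum_le_sum fun E hE ↦
    mul_le_mul_of_nonneg_left (h E (mem_powerset.1 hE)) (subsetWeight_nonneg hp E)

lemma subsetExpect_nonneg (hp : p ∈ Set.Icc (0 : ℝ) 1) {F : Finset α → ℝ}
    (h : ∀ E ⊆ U, 0 ≤ F E) : 0 ≤ subsetExpect p U F :=
  (subsetExpect_const (U := U) 0).symm.le.trans (subsetExpect_mono hp h)

lemma subsetExpect_insert [DecidableEq α] {a : α} (ha : a ∉ U) (F : Finset α → ℝ) :
    subsetExpect p (insert a U) F =
      (1 - p) * subsetExpect p U F + p * subsetExpect p U (fun E ↦ F (insert a E)) := by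
  simp only [subsetExpect, subsetWeight]
  rw [sum_powerset_insert ha, mul_sum, mul_sum]
  congr 1 <;> refine sum_congr rfl fun E hE ↦ ?_
  · rw [card_insert_of_notMem ha, Nat.sub_add_comm (card_le_card (mem_powerset.1 hE)), pow_succ]
    ring
  · rw [card_insert_of_notMem ha, card_insert_of_notMem fun h ↦ ha (mem_powerset.1 hE h),
      Nat.add_sub_add_right, pow_succ]
    ring

lemma subsetExpect_union [DecidableEq α] {V : Finset α} (h : Disjoint U V) (F : Finset α → ℝ) :
    subsetExpect p (U ∪ V) F =
      subsetExpect p U (fun A ↦ subsetExpect p V (fun B ↦ F (A ∪ B))) := by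
  induction U using Finset.induction_on generalizing F with
  | empty => simp [subsetExpect_empty]
  | insert x U hx ih =>
    rw [disjoint_insert_left] at h
    have hxUV : x ∉ U ∪ V := by simp [hx, h.1]
    rw [insert_union, subsetExpect_insert hxUV, subsetExpect_insert hx, ih h.2, ih h.2]
    simp only [insert_union]

lemma subsetExpect_prod (f : α → ℝ) :
    subsetExpect p U (fun E ↦ ∏ e ∈ E, f e) = ∏ e ∈ U, (1 - p + p * f e) := by
  simp_rw [add_comm (1 - p), prod_add, prod_const, prod_mul_distrib, prod_const]
  refine sum_congr rfl fun E hE ↦ ?_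
  rw [subsetWeight, card_sdiff_of_subset (mem_powerset.1 hE)]
  ring

lemma subsetExpect_prod_ite [DecidableEq α] {B : Finset α} (hB : B ⊆ U) (a : ℝ) :
    subsetExpect p U (fun E ↦ ∏ e ∈ E, if e ∈ B then a else 1) = (1 - p + p * a) ^ #B := by
  have hite (e : α) :
      1 - p + p * (if e ∈ B then a else 1) = if e ∈ B then 1 - p + p * a else 1 := by
    split_ifs <;> ring
  simp_rw [subsetExpect_prod, hite]
  rw [prod_ite_mem, inter_eq_right.2 hB, prod_const]

lemma subsetProb_def (P : Finset α → Prop) [DecidablePred P] :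
    subsetProb p U P = subsetExpect p U fun E ↦ if P E then 1 else 0 := by
  unfold subsetProb
  congr!

lemma subsetProb_mono (hp : p ∈ Set.Icc (0 : ℝ) 1) {P Q : Finset α → Prop}
    (h : ∀ E ⊆ U, P E → Q E) : subsetProb p U P ≤ subsetProb p U Q := by
  refine subsetExpect_mono hp fun E hE ↦ ?_
  have := h E hE
  split_ifs <;> simp_all

lemma subsetProb_nonneg (hp : p ∈ Set.Icc (0 : ℝ) 1) (P : Finset α → Prop) :
    0 ≤ subsetProb p U P :=
  subsetExpect_nonneg hp fun E _ ↦ by split_ifs <;> norm_num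

lemma subsetProb_or_le (hp : p ∈ Set.Icc (0 : ℝ) 1) (P Q : Finset α → Prop) :
    subsetProb p U (fun E ↦ P E ∨ Q E) ≤ subsetProb p U P + subsetProb p U Q := by
  unfold subsetProb
  rw [← subsetExpect_add]
  refine subsetExpect_mono hp fun E _ ↦ ?_
  by_cases hP : P E <;> by_cases hQ : Q E <;> simp [hP, hQ]

lemma subsetProb_exists_le (hp : p ∈ Set.Icc (0 : ℝ) 1) {ι : Type*} (s : Finset ι)
    (P : ι → Finset α → Prop) :
    subsetProb p U (fun E ↦ ∃ i ∈ s, P i E) ≤ ∑ i ∈ s, subsetProb p U (P i) := by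
  unfold subsetProb
  rw [← subsetExpect_sum]
  refine subsetExpect_mono hp fun E _ ↦ ?_
  have hnonneg : ∀ i ∈ s, (0 : ℝ) ≤ if P i E then 1 else 0 := fun i _ ↦ by
    split_ifs <;> norm_num
  split_ifs with h
  · obtain ⟨i, hi, hP⟩ := h
    simpa [hP] using single_le_sum hnonneg hi
  · exact sum_nonneg hnonneg

lemma subsetProb_le_subsetExpect (hp : p ∈ Set.Icc (0 : ℝ) 1) {P : Finset α → Prop}
    {F : Finset α → ℝ} (hF : ∀ E ⊆ U, 0 ≤ F E) (hP : ∀ E ⊆ U, P E → 1 ≤ F E) :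
    subsetProb p U P ≤ subsetExpect p U F := by
  refine subsetExpect_mono hp fun E hE ↦ ?_
  split_ifs with h
  exacts [hP E hE h, hF E hE]

lemma subsetProb_disjoint {B : Finset α} (hB : B ⊆ U) :
    subsetProb p U (fun E ↦ Disjoint E B) = (1 - p) ^ #B := by
  have hite (E : Finset α) :
      (if Disjoint E B then (1 : ℝ) else 0) = ∏ e ∈ E, if e ∈ B then 0 else 1 := by
    simp_rw [← ite_not (_ ∈ B), prod_boole, disjoint_left]
  simpa [subsetProb_def, hite] using subsetExpect_prod_ite (p := p) hB 0

lemma subsetProb_le_card_inter_le [DecidableEq α] (hp : p ∈ Set.Icc (0 : ℝ) 1) {B : Finset α}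
    (hB : B ⊆ U) {s : ℝ} (hs : 0 ≤ s) (x : ℝ) :
    subsetProb p U (fun E ↦ x ≤ #(E ∩ B)) ≤ exp (-(s * x) + p * exp s * #B) := by
  have hprod (E : Finset α) : ∏ e ∈ E, (if e ∈ B then exp s else 1) = exp (s * #(E ∩ B)) := by
    rw [prod_ite_mem, prod_const, ← exp_nat_mul, mul_comm]
  calc subsetProb p U (fun E ↦ x ≤ #(E ∩ B))
      ≤ subsetExpect p U (fun E ↦ exp (-(s * x)) * ∏ e ∈ E, if e ∈ B then exp s else 1) := by
        refine subsetProb_le_subsetExpect hp (fun E _ ↦ ?_) fun E _ hE ↦ ?_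
        · rw [hprod]
          positivity
        · rw [hprod, ← exp_add, one_le_exp_iff]
          linarith [mul_le_mul_of_nonneg_left hE hs]
    _ = exp (-(s * x)) * (1 - p + p * exp s) ^ #B := by
        rw [subsetExpect_const_mul, subsetExpect_prod_ite hB]
    _ ≤ exp (-(s * x)) * exp (p * exp s) ^ #B := by
        have hbase : 0 ≤ 1 - p + p * exp s :=
          add_nonneg (sub_nonneg.2 hp.2) (mul_nonneg hp.1 (exp_pos s).le)
        gcongr
        linarith [add_one_le_exp (p * exp s), hp.1]
    _ = exp (-(s * x) + p * exp s * #B) := by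
        rw [← exp_nat_mul, ← exp_add, mul_comm (#B : ℝ)]

lemma sq_subsetExpect_le_mul_subsetProb (hp : p ∈ Set.Icc (0 : ℝ) 1) (X : Finset α → ℝ) :
    subsetExpect p U X ^ 2 ≤
      subsetExpect p U (fun E ↦ X E ^ 2) * subsetProb p U (fun E ↦ X E ≠ 0) := by
  unfold subsetProb subsetExpect
  refine sum_sq_le_sum_mul_sum_of_sq_le_mul _ (fun E _ ↦ ?_) (fun E _ ↦ ?_) fun E _ ↦ ?_
  · exact mul_nonneg (subsetWeight_nonneg hp E) (sq_nonneg _)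
  · exact mul_nonneg (subsetWeight_nonneg hp E) (by dsimp only; split_ifs <;> norm_num)
  · by_cases h : X E = 0
    · simp only [h, mul_zero, ne_eq, not_true, if_false, zero_pow two_ne_zero, le_refl]
    · simp only [h, ne_eq, not_false_eq_true, if_true]
      exact le_of_eq (by ring)

end RandomSubset

/-! ### Bounded differences -/

section BoundedDifferences

variable {α : Type*} {p : ℝ} {U : Finset α}

lemma exp_subsetExpect_le (hp : p ∈ Set.Icc (0 : ℝ) 1) (φ : Finset α → ℝ) :
    exp (subsetExpect p U φ) ≤ subsetExpect p U (fun A ↦ exp (φ A)) :=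
  convexOn_exp.map_sum_le (fun E _ ↦ subsetWeight_nonneg hp E) sum_subsetWeight
    fun _ _ ↦ Set.mem_univ _

-- Exchanging the two independent copies turns the exponential into a hyperbolic cosine.
lemma subsetExpect_exp_sub_le (hp : p ∈ Set.Icc (0 : ℝ) 1) {φ : Finset α → ℝ} {c : ℝ}
    (h : ∀ A ⊆ U, ∀ B ⊆ U, |φ A - φ B| ≤ c) :
    subsetExpect p U (fun A ↦ subsetExpect p U fun B ↦ exp (φ A - φ B)) ≤ exp (c ^ 2 / 2) := by
  have hswap : subsetExpect p U (fun A ↦ subsetExpect p U fun B ↦ exp (φ A - φ B)) =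
      subsetExpect p U (fun A ↦ subsetExpect p U fun B ↦ exp (-(φ A - φ B))) := by
    simp only [neg_sub, subsetExpect, mul_sum]
    rw [sum_comm]
    simp only [mul_left_comm]
  have hcosh : 2 * subsetExpect p U (fun A ↦ subsetExpect p U fun B ↦ exp (φ A - φ B)) =
      2 * subsetExpect p U (fun A ↦ subsetExpect p U fun B ↦ cosh (φ A - φ B)) := by
    conv_lhs => rw [two_mul]; arg 2; rw [hswap]
    simp only [← subsetExpect_add, ← subsetExpect_const_mul, cosh_eq, mul_div_cancel₀ _
      (two_ne_zero' ℝ)]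
  have hbound : ∀ A ⊆ U, ∀ B ⊆ U, cosh (φ A - φ B) ≤ exp (c ^ 2 / 2) := fun A hA B hB ↦
    (cosh_le_cosh.2 ((h A hA B hB).trans (le_abs_self c))).trans (cosh_le_exp_half_sq c)
  rw [mul_left_cancel₀ two_ne_zero hcosh, ← subsetExpect_const (p := p) (U := U) (exp (c ^ 2 / 2))]
  refine subsetExpect_mono hp fun A hA ↦ ?_
  rw [← subsetExpect_const (p := p) (U := U) (exp (c ^ 2 / 2))]
  exact subsetExpect_mono hp (hbound A hA)

lemma subsetExpect_exp_le_of_abs_sub_le (hp : p ∈ Set.Icc (0 : ℝ) 1) {φ : Finset α → ℝ} {c : ℝ}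
    (h : ∀ A ⊆ U, ∀ B ⊆ U, |φ A - φ B| ≤ c) :
    subsetExpect p U (fun A ↦ exp (φ A)) ≤ exp (subsetExpect p U φ + c ^ 2 / 2) := by
  set m := subsetExpect p U φ with hm
  set M := subsetExpect p U (fun A ↦ exp (φ A))
  have hM₀ : 0 ≤ M := subsetExpect_nonneg hp fun A _ ↦ (exp_pos (φ A)).le
  have hjensen : exp (-m) ≤ subsetExpect p U (fun B ↦ exp (-φ B)) := by
    have hneg := exp_subsetExpect_le (U := U) hp (-1 * φ ·)
    rw [subsetExpect_const_mul, ← hm] at hneg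
    simpa only [neg_one_mul] using hneg
  have hdecouple : M * subsetExpect p U (fun B ↦ exp (-φ B)) =
      subsetExpect p U (fun A ↦ subsetExpect p U fun B ↦ exp (φ A - φ B)) := by
    simp only [sub_eq_add_neg, exp_add, subsetExpect_const_mul]
    rw [mul_comm, ← subsetExpect_const_mul]
    simp only [mul_comm]
  calc M = exp m * (M * exp (-m)) := by
        rw [mul_left_comm, ← exp_add, add_neg_cancel, exp_zero, mul_one]
    _ ≤ exp m * exp (c ^ 2 / 2) := by
        gcongr
        exact (mul_le_mul_of_nonneg_left hjensen hM₀).trans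
          (hdecouple.le.trans (subsetExpect_exp_sub_le hp h))
    _ = exp (m + c ^ 2 / 2) := (exp_add _ _).symm

/-- Re-randomizing the elements of `U` with label `v` changes `F` by at most `c v`. -/
def HasBoundedDifferences {ι : Type*} (b : α → ι) (U : Finset α) (F : Finset α → ℝ)
    (c : ι → ℝ) : Prop :=
  ∀ v, ∀ A ⊆ U, ∀ B ⊆ U, (∀ e, b e ≠ v → (e ∈ A ↔ e ∈ B)) → |F A - F B| ≤ c v

lemma HasBoundedDifferences.const_mul {ι : Type*} {b : α → ι} {F : Finset α → ℝ} {c : ι → ℝ}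
    (hF : HasBoundedDifferences b U F c) (s : ℝ) :
    HasBoundedDifferences b U (fun A ↦ s * F A) (fun v ↦ |s| * c v) := by
  intro v A hA B hB hAB
  rw [← mul_sub, abs_mul]
  exact mul_le_mul_of_nonneg_left (hF v A hA B hB hAB) (abs_nonneg s)

lemma HasBoundedDifferences.subsetExpect_right [DecidableEq α] (hp : p ∈ Set.Icc (0 : ℝ) 1)
    {ι : Type*} {b : α → ι} {V : Finset α} {F : Finset α → ℝ} {c : ι → ℝ}
    (hF : HasBoundedDifferences b (U ∪ V) F c) :
    HasBoundedDifferences b U (fun A ↦ subsetExpect p V fun B ↦ F (A ∪ B)) c := by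
  intro v A hA B hB hAB
  have hdiff {A B : Finset α} (hA : A ⊆ U) (hB : B ⊆ U)
      (hAB : ∀ e, b e ≠ v → (e ∈ A ↔ e ∈ B)) :
      subsetExpect p V (fun C ↦ F (A ∪ C)) - subsetExpect p V (fun C ↦ F (B ∪ C)) ≤ c v := by
    rw [sub_le_iff_le_add', ← subsetExpect_const (p := p) (U := V) (c v), ← subsetExpect_add]
    refine subsetExpect_mono hp fun C hC ↦ sub_le_iff_le_add'.1 <| (le_abs_self _).trans <|
      hF v _ (union_subset_union hA hC) _ (union_subset_union hB hC) fun e he ↦ ?_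
    simp [hAB e he]
  exact abs_sub_le_iff.2 ⟨hdiff hA hB hAB, hdiff hB hA fun e he ↦ (hAB e he).symm⟩

lemma HasBoundedDifferences.subsetExpect_exp_le (hp : p ∈ Set.Icc (0 : ℝ) 1)
    {ι : Type*} {b : α → ι} {F : Finset α → ℝ} {c : ι → ℝ}
    (hF : HasBoundedDifferences b U F c) {T : Finset ι} (hT : ∀ e ∈ U, b e ∈ T) :
    subsetExpect p U (fun A ↦ exp (F A)) ≤
      exp (subsetExpect p U F + (∑ v ∈ T, c v ^ 2) / 2) := by
  induction T using Finset.induction_on generalizing U F with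
  | empty =>
    obtain rfl : U = ∅ := eq_empty_of_forall_notMem fun e he ↦ notMem_empty _ (hT e he)
    simp [subsetExpect_empty]
  | insert v T hv ih =>
    obtain ⟨V, W, hVW, rfl, hV, hW⟩ : ∃ V W : Finset α, Disjoint V W ∧ U = V ∪ W ∧
        (∀ e ∈ V, b e ≠ v) ∧ ∀ e ∈ W, b e = v :=
      ⟨{e ∈ U | b e ≠ v}, {e ∈ U | ¬b e ≠ v}, disjoint_filter_filter_not _ _ _,
        (filter_union_filter_not_eq _ U).symm, by simp, by simp⟩
    set G : Finset α → ℝ := fun A ↦ subsetExpect p W fun B ↦ F (A ∪ B)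
    have hblock : ∀ A ⊆ V, subsetExpect p W (fun B ↦ exp (F (A ∪ B))) ≤
        exp (c v ^ 2 / 2) * exp (G A) := by
      intro A hA
      rw [← exp_add, add_comm]
      refine subsetExpect_exp_le_of_abs_sub_le hp fun B hB C hC ↦
        hF v _ (union_subset_union hA hB) _ (union_subset_union hA hC) fun e he ↦ ?_
      have hB' : e ∉ B := fun h ↦ he (hW e (hB h))
      have hC' : e ∉ C := fun h ↦ he (hW e (hC h))
      simp [hB', hC']
    have hrest : subsetExpect p V (fun A ↦ exp (G A)) ≤
        exp (subsetExpect p V G + (∑ v ∈ T, c v ^ 2) / 2) :=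
      ih (hF.subsetExpect_right hp) fun e he ↦
        (mem_insert.1 (hT e (mem_union_left _ he))).resolve_left (hV e he)
    calc subsetExpect p (V ∪ W) (fun A ↦ exp (F A))
        ≤ exp (c v ^ 2 / 2) * subsetExpect p V (fun A ↦ exp (G A)) := by
          rw [subsetExpect_union hVW, ← subsetExpect_const_mul]
          exact subsetExpect_mono hp hblock
      _ ≤ exp (c v ^ 2 / 2) * exp (subsetExpect p V G + (∑ v ∈ T, c v ^ 2) / 2) := by gcongr
      _ = exp (subsetExpect p (V ∪ W) F + (∑ v ∈ insert v T, c v ^ 2) / 2) := by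
          rw [← exp_add, subsetExpect_union hVW, sum_insert hv, add_div, add_left_comm]

/-- McDiarmid's inequality for the upper tail. -/
lemma HasBoundedDifferences.subsetProb_add_le (hp : p ∈ Set.Icc (0 : ℝ) 1) {ι : Type*} [Fintype ι]
    {b : α → ι} {F : Finset α → ℝ} {c : ι → ℝ} (hF : HasBoundedDifferences b U F c)
    (hc : 0 < ∑ v, c v ^ 2) {t : ℝ} (ht : 0 ≤ t) :
    subsetProb p U (fun E ↦ subsetExpect p U F + t ≤ F E) ≤
      exp (-(t ^ 2 / (2 * ∑ v, c v ^ 2))) := by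
  set m := subsetExpect p U F with hm
  set V := ∑ v, c v ^ 2 with hV
  set s := t / V with hs
  have hs₀ : 0 ≤ s := by positivity
  have hmgf : subsetExpect p U (fun E ↦ exp (s * F E)) ≤ exp (s * m + s ^ 2 * V / 2) := by
    simpa [subsetExpect_const_mul, mul_pow, ← mul_sum, ← hm, ← hV] using
      (hF.const_mul s).subsetExpect_exp_le hp (T := univ) fun _ _ ↦ mem_univ _
  calc subsetProb p U (fun E ↦ m + t ≤ F E)
      ≤ subsetExpect p U (fun E ↦ exp (-(s * (m + t))) * exp (s * F E)) := by
        refine subsetProb_le_subsetExpect hp (fun E _ ↦ by positivity) fun E _ hE ↦ ?_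
        rw [← exp_add, one_le_exp_iff]
        linarith [mul_le_mul_of_nonneg_left hE hs₀]
    _ ≤ exp (-(s * (m + t))) * exp (s * m + s ^ 2 * V / 2) := by
        rw [subsetExpect_const_mul]
        gcongr
    _ = exp (-(t ^ 2 / (2 * V))) := by
        rw [← exp_add, hs]
        congr 1
        field_simp
        ring

lemma HasBoundedDifferences.subsetProb_le_sub (hp : p ∈ Set.Icc (0 : ℝ) 1) {ι : Type*} [Fintype ι]
    {b : α → ι} {F : Finset α → ℝ} {c : ι → ℝ} (hF : HasBoundedDifferences b U F c)
    (hc : 0 < ∑ v, c v ^ 2) {t : ℝ} (ht : 0 ≤ t) :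
    subsetProb p U (fun E ↦ F E ≤ subsetExpect p U F - t) ≤
      exp (-(t ^ 2 / (2 * ∑ v, c v ^ 2))) := by
  have hneg : HasBoundedDifferences b U (fun E ↦ -1 * F E) c := by
    simpa using hF.const_mul (-1)
  refine (subsetProb_mono hp fun E _ hE ↦ ?_).trans (hneg.subsetProb_add_le hp hc ht)
  rw [subsetExpect_const_mul]
  linarith

-- The lower tail forces the mean of `F` to be at most `t`; then the upper tail applies.
lemma HasBoundedDifferences.subsetProb_two_mul_le (hp : p ∈ Set.Icc (0 : ℝ) 1) {ι : Type*}
    [Fintype ι] {b : α → ι} {F : Finset α → ℝ} {c : ι → ℝ} (hF : HasBoundedDifferences b U F c)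
    (hc : 0 < ∑ v, c v ^ 2) {t : ℝ} (ht : 0 ≤ t)
    (hF₀ : exp (-(t ^ 2 / (2 * ∑ v, c v ^ 2))) ≤ subsetProb p U fun E ↦ F E ≤ 0) :
    subsetProb p U (fun E ↦ 2 * t ≤ F E) ≤ exp (-(t ^ 2 / (2 * ∑ v, c v ^ 2))) := by
  have hmean : subsetExpect p U F ≤ t := by
    by_contra! hlt
    refine (hF₀.trans ?_).not_gt (exp_lt_exp.2 <| neg_lt_neg <|
      div_lt_div_of_pos_right (pow_lt_pow_left₀ hlt ht two_ne_zero) (mul_pos two_pos hc))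
    simpa using hF.subsetProb_le_sub hp hc (ht.trans hlt.le)
  exact (subsetProb_mono hp fun E _ hE ↦ by linarith).trans (hF.subsetProb_add_le hp hc ht)

end BoundedDifferences

/-! ### Types of colorings -/

lemma sum_prod_comp {ι β : Type*} [Fintype ι] [Fintype β] [DecidableEq ι] (g : β → ℝ) :
    ∑ f : ι → β, ∏ v, g (f v) = (∑ c, g c) ^ Fintype.card ι := by
  simpa using sum_prod_piFinset (univ : Finset β) fun _ : ι ↦ g

section FiberCard

variable {ι β : Type*} [Fintype ι] [DecidableEq β]

/-- The size of the color class of `c` in the coloring `f`. -/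
def fiberCard (f : ι → β) (c : β) : ℕ :=
  #{v | f v = c}

/-- The probability of `f` when the values `f v` are chosen independently from the empirical
distribution of `f` itself. -/
noncomputable def empiricalLikelihood (f : ι → β) : ℝ :=
  ∏ v, (fiberCard f (f v) : ℝ) / Fintype.card ι

variable [Fintype β]

lemma sum_fiberCard (f : ι → β) : ∑ c, fiberCard f c = Fintype.card ι :=
  (card_eq_sum_card_fiberwise fun _ _ ↦ mem_univ _).symm

lemma prod_comp_eq_prod_pow_fiberCard (f : ι → β) (g : β → ℝ) :
    ∏ v, g (f v) = ∏ c, g c ^ fiberCard f c := by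
  rw [← prod_fiberwise_of_maps_to' (fun v _ ↦ mem_univ (f v)) g]
  simp only [prod_const, fiberCard]

lemma sum_empiricalLikelihood_le_one [Nonempty ι] [DecidableEq ι] (t : β → ℕ) :
    ∑ f : ι → β with fiberCard f = t, empiricalLikelihood f ≤ 1 := by
  rcases isEmpty_or_nonempty {f : ι → β // fiberCard f = t} with hempty | ⟨f₀, hf₀⟩
  · rw [filter_eq_empty_iff.2 fun f _ hf ↦ hempty.elim ⟨f, hf⟩, sum_empty]
    exact zero_le_one
  have hsum : ∑ c, (t c : ℝ) / Fintype.card ι = 1 := by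
    rw [← sum_div, div_eq_one_iff_eq (by positivity), ← hf₀]
    exact_mod_cast sum_fiberCard f₀
  calc ∑ f : ι → β with fiberCard f = t, empiricalLikelihood f
      = ∑ f : ι → β with fiberCard f = t, ∏ v, (t (f v) : ℝ) / Fintype.card ι := by
        refine sum_congr rfl fun f hf ↦ ?_
        rw [empiricalLikelihood, (mem_filter.1 hf).2]
    _ ≤ ∑ f : ι → β, ∏ v, (t (f v) : ℝ) / Fintype.card ι :=
        sum_le_sum_of_subset_of_nonneg (filter_subset _ _) fun f _ _ ↦
          prod_nonneg fun v _ ↦ by positivity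
    _ = 1 := by rw [sum_prod_comp fun c ↦ (t c : ℝ) / Fintype.card ι, hsum, one_pow]

-- The sum over the colorings of a fixed type is a probability, so the number of types is a bound.
lemma sum_empiricalLikelihood_le [Nonempty ι] [DecidableEq ι] :
    ∑ f : ι → β, empiricalLikelihood f ≤ ((Fintype.card ι : ℝ) + 1) ^ Fintype.card β := by
  have hmaps : ∀ f ∈ (univ : Finset (ι → β)),
      fiberCard f ∈ Fintype.piFinset fun _ : β ↦ range (Fintype.card ι + 1) := fun f _ ↦
    Fintype.mem_piFinset.2 fun c ↦ mem_range_succ_iff.2 (card_filter_le _ _)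
  rw [← sum_fiberwise_of_maps_to hmaps]
  refine (sum_le_sum fun t _ ↦ sum_empiricalLikelihood_le_one t).trans (le_of_eq ?_)
  simp

lemma exp_sum_fiberCard_mul_log [Nonempty ι] (f : ι → β) {a : ℝ} (ha : 0 < a) :
    exp (∑ c, fiberCard f c * log (a * (fiberCard f c / Fintype.card ι))) =
      a ^ Fintype.card ι * empiricalLikelihood f := by
  have hprod : ∏ v, a * ((fiberCard f (f v) : ℝ) / Fintype.card ι) =
      a ^ Fintype.card ι * empiricalLikelihood f := by
    rw [prod_mul_distrib, prod_const, card_univ, empiricalLikelihood]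
  rw [← hprod, prod_comp_eq_prod_pow_fiberCard f fun c ↦ a * (fiberCard f c / Fintype.card ι),
    exp_sum]
  refine prod_congr rfl fun c _ ↦ ?_
  rcases Nat.eq_zero_or_pos (fiberCard f c) with hc | hc
  · simp [hc]
  · rw [exp_nat_mul, exp_log (by positivity)]

end FiberCard

/-! ### The second moment of the number of proper colorings -/

-- Every event is weighted by the inverse of its probability, so that the first moment is `#S`.
lemma sq_card_le_sum_mul_subsetProb_exists_disjoint {α ι : Type*} [DecidableEq α] {p : ℝ}
    (hp : p ∈ Set.Ico (0 : ℝ) 1) {U : Finset α} (S : Finset ι) {B : ι → Finset α}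
    (hB : ∀ i, B i ⊆ U) :
    (#S : ℝ) ^ 2 ≤ (∑ i ∈ S, ∑ j ∈ S, (1 - p)⁻¹ ^ #(B i ∩ B j)) *
      subsetProb p U fun E ↦ ∃ i ∈ S, Disjoint E (B i) := by
  have hp' : p ∈ Set.Icc (0 : ℝ) 1 := Set.Ico_subset_Icc_self hp
  have hq : 0 < 1 - p := sub_pos.2 hp.2
  have hcancel (m : ℕ) : (1 - p)⁻¹ ^ m * (1 - p) ^ m = 1 := by
    rw [← mul_pow, inv_mul_cancel₀ hq.ne', one_pow]
  set X : Finset α → ℝ := fun E ↦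
    ∑ i ∈ S, (1 - p)⁻¹ ^ #(B i) * if Disjoint E (B i) then 1 else 0
  have hfirst : subsetExpect p U X = #S := by
    simp only [X, subsetExpect_sum, subsetExpect_const_mul, ← subsetProb_def,
      subsetProb_disjoint (hB _), hcancel, sum_const, nsmul_one]
  have hsq (E : Finset α) : X E ^ 2 = ∑ i ∈ S, ∑ j ∈ S,
      (1 - p)⁻¹ ^ (#(B i) + #(B j)) * if Disjoint E (B i ∪ B j) then 1 else 0 := by
    rw [sq, sum_mul_sum]
    refine sum_congr rfl fun i _ ↦ sum_congr rfl fun j _ ↦ ?_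
    rw [mul_mul_mul_comm, ← pow_add, ite_zero_mul_ite_zero, one_mul]
    simp only [disjoint_union_right]
  have hsecond : subsetExpect p U (fun E ↦ X E ^ 2) =
      ∑ i ∈ S, ∑ j ∈ S, (1 - p)⁻¹ ^ #(B i ∩ B j) := by
    simp only [hsq, subsetExpect_sum, subsetExpect_const_mul, ← subsetProb_def,
      subsetProb_disjoint (union_subset (hB _) (hB _))]
    refine sum_congr rfl fun i _ ↦ sum_congr rfl fun j _ ↦ ?_
    rw [← card_union_add_card_inter, pow_add, mul_right_comm, hcancel, one_mul]
  have hcauchy := sq_subsetExpect_le_mul_subsetProb hp' X (U := U)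
  rw [hfirst, hsecond] at hcauchy
  refine hcauchy.trans (mul_le_mul_of_nonneg_left (subsetProb_mono hp' fun E _ hE ↦ ?_) ?_)
  · obtain ⟨i, hi, hne⟩ := exists_ne_zero_of_sum_ne_zero hE
    exact ⟨i, hi, by_contra fun hE ↦ hne (by rw [if_neg hE, mul_zero])⟩
  · exact sum_nonneg fun _ _ ↦ sum_nonneg fun _ _ ↦ pow_nonneg (inv_nonneg.2 hq.le) _

section MonoEdges

variable {n r : ℕ} {β γ : Type*}

lemma mem_edgeCandidates {e : Finset (Fin n)} : e ∈ edgeCandidates n r ↔ #e = r := by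
  simp [edgeCandidates]

/-- The potential edges on which the coloring `f` is constant. -/
noncomputable def monoEdges (r : ℕ) (f : Fin n → β) : Finset (Finset (Fin n)) :=
  {e ∈ edgeCandidates n r | ∀ v ∈ e, ∀ w ∈ e, f v = f w}

lemma mem_monoEdges {f : Fin n → β} {e : Finset (Fin n)} :
    e ∈ monoEdges r f ↔ #e = r ∧ ∀ v ∈ e, ∀ w ∈ e, f v = f w := by
  rw [monoEdges, mem_filter, mem_edgeCandidates]

lemma monoEdges_subset (f : Fin n → β) : monoEdges r f ⊆ edgeCandidates n r :=
  filter_subset _ _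

lemma properColoring_iff_disjoint_monoEdges {k : ℕ} {E : Finset (Finset (Fin n))}
    (hE : E ⊆ edgeCandidates n r) (σ : Fin n → Fin k) :
    ProperColoring E σ ↔ Disjoint E (monoEdges r σ) := by
  simp only [ProperColoring, disjoint_left, mem_monoEdges]
  refine forall₂_congr fun e he ↦ ?_
  simp [mem_edgeCandidates.1 (hE he)]

lemma monoEdges_inter (f : Fin n → β) (g : Fin n → γ) :
    monoEdges r f ∩ monoEdges r g = monoEdges r fun v ↦ (f v, g v) := by
  ext e
  simp only [mem_inter, mem_monoEdges, Prod.mk.injEq]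
  grind

lemma card_monoEdges_le [Fintype β] [DecidableEq β] (hr : r ≠ 0) (f : Fin n → β) :
    #(monoEdges r f) ≤ ∑ c, (fiberCard f c).choose r := by
  have hsub : monoEdges r f ⊆
      univ.biUnion fun c ↦ ({v | f v = c} : Finset (Fin n)).powersetCard r := by
    intro e he
    obtain ⟨hcard, hmono⟩ := mem_monoEdges.1 he
    obtain ⟨v, hv⟩ := card_ne_zero.1 (hcard ▸ hr)
    exact mem_biUnion.2 ⟨f v, mem_univ _, mem_powersetCard.2
      ⟨fun w hw ↦ mem_filter.2 ⟨mem_univ _, hmono w hw v hv⟩, hcard⟩⟩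
  refine (card_le_card hsub).trans (card_biUnion_le.trans_eq ?_)
  simp only [card_powersetCard, fiberCard]

lemma sq_card_le_sum_mul_subsetProb_properColoring {k : ℕ} {p : ℝ} (hp : p ∈ Set.Ico (0 : ℝ) 1)
    (S : Finset (Fin n → Fin k)) :
    (#S : ℝ) ^ 2 ≤
      (∑ σ ∈ S, ∑ τ ∈ S, (1 - p)⁻¹ ^ #(monoEdges r fun v ↦ (σ v, τ v))) *
        subsetProb p (edgeCandidates n r) fun E ↦ ∃ σ ∈ S, ProperColoring E σ := by
  have hsecond := sq_card_le_sum_mul_subsetProb_exists_disjoint hp S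
    (monoEdges_subset (r := r) (n := n) (β := Fin k))
  simp only [monoEdges_inter] at hsecond
  refine hsecond.trans (mul_le_mul_of_nonneg_left ?_ ?_)
  · exact subsetProb_mono (Set.Ico_subset_Icc_self hp) fun E hE ⟨σ, hσ, hdisj⟩ ↦
      ⟨σ, hσ, (properColoring_iff_disjoint_monoEdges hE σ).2 hdisj⟩
  · exact sum_nonneg fun _ _ ↦ sum_nonneg fun _ _ ↦
      pow_nonneg (inv_nonneg.2 (sub_nonneg.2 hp.2.le)) _

end MonoEdges

/-! ### Energy and entropy of an overlap -/

section Overlap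

lemma mul_pow_le_log_mul_sub_one {m : ℕ} (hm : 2 ≤ m) {k Λ M x : ℝ} (hk : 0 < k)
    (hlog : 4 ≤ log k) (hΛ : 0 ≤ Λ) (hΛk : Λ ≤ log k) (hΛM : Λ * M ^ m ≤ log k - 2)
    (hx : 0 < x) (hxM : x ≤ M) (hkx : 2 ≤ log (k * x)) :
    Λ * x ^ m ≤ log (k * x) - 1 := by
  rw [log_mul hk.ne' hx.ne'] at hkx ⊢
  rcases le_or_gt x (1 / 2) with hx_half | hx_half
  · have hsq : Λ * x ^ m ≤ log k * x ^ 2 :=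
      mul_le_mul hΛk (pow_le_pow_of_le_one hx.le (by linarith) hm) (by positivity) (by linarith)
    rcases le_or_gt (k * x ^ 2) 1 with hkx2 | hkx2
    · have : log k * x ^ 2 ≤ k * x ^ 2 := by gcongr; exact log_le_self hk.le
      linarith
    · have hlogsq : 0 ≤ log k + 2 * log x := by
        have := log_nonneg hkx2.le
        rwa [log_mul hk.ne' (by positivity), log_pow, Nat.cast_ofNat] at this
      have : log k * x ^ 2 ≤ log k * (1 / 2) ^ 2 := by gcongr
      linarith
  · have hlogx : -1 ≤ log x := by
      rw [← log_exp (-1)]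
      exact log_le_log (exp_pos _) (by linarith [exp_neg_one_lt_half])
    have : Λ * x ^ m ≤ Λ * M ^ m := by gcongr
    linarith

-- With `x = k α`, every entry `α` of the overlap matrix of two colorings contributes less to the
-- energy than to the relative entropy, up to the last, negligible term.
lemma mul_pow_le_mul_log_mul_add {r : ℕ} (hr : 3 ≤ r) {k Λ M x : ℝ} (hk : 0 < k)
    (hlog : 4 ≤ log k) (hΛ : 0 ≤ Λ) (hM : 1 ≤ M) (hΛM : Λ * M ^ (r - 1) ≤ log k - 2)
    (hx : 0 ≤ x) (hxM : x ≤ M) :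
    Λ * x ^ r ≤ x * log (k * x) - x + 1 / k + log k * (exp 2 / k) ^ 3 := by
  have hΛk : Λ ≤ log k := by linarith [le_mul_of_one_le_right hΛ (one_le_pow₀ hM (n := r - 1))]
  rcases le_or_gt x (exp 2 / k) with hsmall | hlarge
  · have hexp : exp 2 / k ≤ 1 := by
      rw [div_le_one hk, ← le_log_iff_exp_le hk]
      linarith
    have henergy : Λ * x ^ r ≤ log k * (exp 2 / k) ^ 3 :=
      mul_le_mul hΛk ((pow_le_pow_of_le_one hx (hsmall.trans hexp) hr).trans (by gcongr))
        (by positivity) (by linarith)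
    have hentropy : x * log (k * x) - x + 1 / k = InformationTheory.klFun (k * x) / k := by
      rw [InformationTheory.klFun]
      field_simp
      ring
    have := InformationTheory.klFun_nonneg (mul_nonneg hk.le hx)
    rw [hentropy]
    exact henergy.trans (le_add_of_nonneg_left (by positivity))
  · have hx₀ : 0 < x := (by positivity : 0 < exp 2 / k).trans hlarge
    have hkx : 2 ≤ log (k * x) := by
      rw [le_log_iff_exp_le (by positivity), mul_comm]
      exact ((div_lt_iff₀ hk).1 hlarge).le
    calc Λ * x ^ r = x * (Λ * x ^ (r - 1)) := by
          rw [mul_left_comm, mul_pow_sub_one (by lia)]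
      _ ≤ x * (log (k * x) - 1) := by
          gcongr
          exact mul_pow_le_log_mul_sub_one (by lia) hk hlog hΛ hΛk hΛM hx₀ hxM hkx
      _ ≤ x * log (k * x) - x + 1 / k + log k * (exp 2 / k) ^ 3 := by
          rw [mul_sub_one, add_assoc]
          exact le_add_of_nonneg_right (by positivity)

variable {r n k : ℕ} {Λ M : ℝ}

lemma mul_choose_le_mul_log_add (hr : 3 ≤ r) (hn : n ≠ 0) (hlog : 4 ≤ log k) (hΛ : 0 ≤ Λ)
    (hM : 1 ≤ M) (hΛM : Λ * M ^ (r - 1) ≤ log k - 2) {N : ℕ} (hN : (N : ℝ) ≤ M * n / k) :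
    Λ * r.factorial * (k / n : ℝ) ^ (r - 1) * N.choose r ≤
      N * log ((k : ℝ) ^ 2 * (N / n)) - N + n / (k : ℝ) ^ 2
        + n * (log k * exp 6 / (k : ℝ) ^ 4) := by
  have hk : (0 : ℝ) < k := Nat.cast_pos.2 <| Nat.pos_of_ne_zero fun h ↦ by norm_num [h] at hlog
  have hn' : (0 : ℝ) < n := by positivity
  have hxM : k * (N / n : ℝ) ≤ M := by
    rw [le_div_iff₀ hk] at hN
    rw [← mul_div_assoc, div_le_iff₀ hn', mul_comm]
    exact hN
  have hentry := mul_pow_le_mul_log_mul_add hr hk hlog hΛ hM hΛM (by positivity) hxM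
  calc Λ * r.factorial * (k / n : ℝ) ^ (r - 1) * N.choose r
      ≤ Λ * r.factorial * (k / n : ℝ) ^ (r - 1) * (N ^ r / r.factorial) := by
        gcongr
        exact Nat.choose_le_pow_div r N
    _ = n / k * (Λ * (k * (N / n : ℝ)) ^ r) := by
        obtain ⟨m, rfl⟩ : ∃ m, r = m + 1 := ⟨r - 1, by lia⟩
        rw [Nat.add_sub_cancel, mul_pow, div_pow, div_pow, pow_succ (k : ℝ), pow_succ (n : ℝ)]
        field_simp
    _ ≤ n / k * (k * (N / n) * log (k * (k * (N / n))) - k * (N / n) + 1 / k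
          + log k * (exp 2 / k) ^ 3) := by gcongr
    _ = _ := by
        rw [← mul_assoc (k : ℝ) k, ← sq, div_pow, ← exp_nat_mul,
          show ((3 : ℕ) : ℝ) * 2 = 6 by norm_num]
        field_simp

lemma mul_card_monoEdges_le_sum_mul_log_add (hr : 3 ≤ r) (hn : n ≠ 0) (hlog : 4 ≤ log k)
    (hΛ : 0 ≤ Λ) (hM : 1 ≤ M) (hΛM : Λ * M ^ (r - 1) ≤ log k - 2)
    {f : Fin n → Fin k × Fin k} (hf : ∀ c, (fiberCard f c : ℝ) ≤ M * n / k) :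
    Λ * r.factorial * (k / n : ℝ) ^ (r - 1) * #(monoEdges r f) ≤
      ∑ c, (fiberCard f c : ℝ) * log ((k : ℝ) ^ 2 * (fiberCard f c / n))
        + n * (log k * exp 6 / (k : ℝ) ^ 2) := by
  have hk : (k : ℝ) ≠ 0 := fun h ↦ by norm_num [h] at hlog
  have hcard : (#(monoEdges r f) : ℝ) ≤ ∑ c, ((fiberCard f c).choose r : ℝ) := by
    exact_mod_cast card_monoEdges_le (by lia) f
  have hsum : ∑ c, (fiberCard f c : ℝ) = n := by
    exact_mod_cast (sum_fiberCard f).trans (Fintype.card_fin n)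
  calc Λ * r.factorial * (k / n : ℝ) ^ (r - 1) * #(monoEdges r f)
      ≤ ∑ c, Λ * r.factorial * (k / n : ℝ) ^ (r - 1) * (fiberCard f c).choose r := by
        rw [← mul_sum]
        gcongr
    _ ≤ ∑ c, (fiberCard f c * log ((k : ℝ) ^ 2 * (fiberCard f c / n)) - fiberCard f c
          + n / (k : ℝ) ^ 2 + n * (log k * exp 6 / (k : ℝ) ^ 4)) :=
        sum_le_sum fun c _ ↦ mul_choose_le_mul_log_add hr hn hlog hΛ hM hΛM (hf c)
    _ = _ := by
        simp only [sum_add_distrib, sum_sub_distrib, hsum, sum_const, card_univ,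
          Fintype.card_prod, Fintype.card_fin, nsmul_eq_mul, Nat.cast_mul]
        generalize ∑ c, (fiberCard f c : ℝ) * log ((k : ℝ) ^ 2 * (fiberCard f c / n)) = y
        field_simp
        ring

lemma pow_card_monoEdges_le_empiricalLikelihood (hr : 3 ≤ r) (hn : n ≠ 0) (hlog : 4 ≤ log k)
    (hΛ : 0 ≤ Λ) (hM : 1 ≤ M) (hΛM : Λ * M ^ (r - 1) ≤ log k - 2) {q : ℝ} (hq : 0 ≤ q)
    (hqΛ : q ≤ exp (Λ * r.factorial * (k / n : ℝ) ^ (r - 1)))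
    {f : Fin n → Fin k × Fin k} (hf : ∀ c, (fiberCard f c : ℝ) ≤ M * n / k) :
    q ^ #(monoEdges r f) ≤ exp (n * (log k * exp 6 / (k : ℝ) ^ 2)) *
      (((k : ℝ) ^ 2) ^ n * empiricalLikelihood f) := by
  have hk : (0 : ℝ) < k := Nat.cast_pos.2 <| Nat.pos_of_ne_zero fun h ↦ by norm_num [h] at hlog
  have : NeZero n := ⟨hn⟩
  have hlikelihood := exp_sum_fiberCard_mul_log f (pow_pos hk 2)
  rw [Fintype.card_fin] at hlikelihood
  calc q ^ #(monoEdges r f)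
      ≤ exp (Λ * r.factorial * (k / n : ℝ) ^ (r - 1)) ^ #(monoEdges r f) := by gcongr
    _ = exp (Λ * r.factorial * (k / n : ℝ) ^ (r - 1) * #(monoEdges r f)) := by
        rw [← exp_nat_mul, mul_comm]
    _ ≤ _ := exp_le_exp.2
        (mul_card_monoEdges_le_sum_mul_log_add hr hn hlog hΛ hM hΛM hf)
    _ = _ := by rw [exp_add, hlikelihood, mul_comm]

end Overlap

/-! ### Balanced colorings -/

section Balanced

lemma klFun_pos {M : ℝ} (hM : 1 < M) : 0 < InformationTheory.klFun M :=
  (InformationTheory.klFun_nonneg (by linarith)).lt_of_ne' fun h ↦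
    hM.ne' ((InformationTheory.klFun_eq_zero_iff (by linarith)).1 h)

-- Chernoff's bound: every coloring is weighted by `M ^ fiberCard f c`.
lemma card_lt_fiberCard_le {ι β : Type*} [Fintype ι] [Fintype β] [DecidableEq ι] [DecidableEq β]
    {M : ℝ} (hM : 1 ≤ M) (c : β) :
    (#{f : ι → β | M * Fintype.card ι / Fintype.card β < fiberCard f c} : ℝ) ≤
      (Fintype.card β : ℝ) ^ Fintype.card ι *
        exp (-(InformationTheory.klFun M / Fintype.card β * Fintype.card ι)) := by
  have hβ : (0 : ℝ) < Fintype.card β := Nat.cast_pos.2 (Fintype.card_pos_iff.2 ⟨c⟩)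
  set n := Fintype.card ι
  set k := Fintype.card β
  set x : ℝ := M * n / k with hx
  set s := log M
  have hs₀ : 0 ≤ s := log_nonneg hM
  have hprod (f : ι → β) : ∏ v, (if f v = c then M else 1) = exp (s * fiberCard f c) := by
    rw [← prod_filter, prod_const, ← exp_log (zero_lt_one.trans_le hM), ← exp_nat_mul, mul_comm,
      fiberCard]
  have hsum : ∑ b : β, (if b = c then M else 1) = k * ((M - 1) / k + 1) := by
    rw [← add_sum_erase _ _ (mem_univ c), if_pos rfl,
      sum_congr rfl fun b hb ↦ if_neg (ne_of_mem_erase hb), sum_const, nsmul_one,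
      cast_card_erase_of_mem (mem_univ c), card_univ]
    field_simp
    ring
  calc (#{f : ι → β | x < fiberCard f c} : ℝ)
      = ∑ f : ι → β with x < fiberCard f c, 1 := by simp
    _ ≤ ∑ f : ι → β, exp (-(s * x)) * ∏ v, (if f v = c then M else 1) := by
        simp only [hprod, ← exp_add]
        rw [sum_filter]
        refine sum_le_sum fun f _ ↦ ?_
        split_ifs with hf
        · rw [one_le_exp_iff]
          linarith [mul_le_mul_of_nonneg_left hf.le hs₀]
        · positivity
    _ = k ^ n * (exp (-(s * x)) * ((M - 1) / k + 1) ^ n) := by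
        rw [← mul_sum, sum_prod_comp fun b ↦ if b = c then M else 1, hsum, mul_pow, mul_left_comm]
    _ ≤ k ^ n * (exp (-(s * x)) * exp ((M - 1) / k) ^ n) := by
        gcongr
        exact add_one_le_exp _
    _ = k ^ n * exp (-(InformationTheory.klFun M / k * n)) := by
        rw [← exp_nat_mul, ← exp_add, InformationTheory.klFun, hx]
        congr 2
        field_simp
        ring

/-- The colorings all of whose classes have at most `M n / k` vertices, that is, at most `M` times
the average. -/
noncomputable def balancedColorings (n k : ℕ) (M : ℝ) : Finset (Fin n → Fin k) :=
  {σ | ∀ i, (fiberCard σ i : ℝ) ≤ M * n / k}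

lemma mem_balancedColorings {n k : ℕ} {M : ℝ} {σ : Fin n → Fin k} :
    σ ∈ balancedColorings n k M ↔ ∀ i, (fiberCard σ i : ℝ) ≤ M * n / k := by
  simp [balancedColorings]

lemma pow_sub_le_card_balancedColorings (n k : ℕ) {M : ℝ} (hM : 1 ≤ M) :
    (k : ℝ) ^ n * (1 - k * exp (-(InformationTheory.klFun M / k * n))) ≤
      #(balancedColorings n k M) := by
  have hsub : (balancedColorings n k M)ᶜ ⊆
      univ.biUnion fun i ↦ {σ : Fin n → Fin k | M * n / k < fiberCard σ i} := by
    intro σ hσ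
    rw [mem_compl, mem_balancedColorings] at hσ
    push Not at hσ
    simpa using hσ
  have hcompl : (#(balancedColorings n k M)ᶜ : ℝ) ≤
      ∑ _i : Fin k, (k : ℝ) ^ n * exp (-(InformationTheory.klFun M / k * n)) := by
    calc (#(balancedColorings n k M)ᶜ : ℝ)
        ≤ ∑ i, (#{σ : Fin n → Fin k | M * n / k < fiberCard σ i} : ℝ) := by
          exact_mod_cast (card_le_card hsub).trans card_biUnion_le
      _ ≤ _ := sum_le_sum fun i _ ↦ by simpa using card_lt_fiberCard_le (ι := Fin n) hM i
  have htotal : (#(balancedColorings n k M) : ℝ) + #(balancedColorings n k M)ᶜ = k ^ n := by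
    exact_mod_cast (card_add_card_compl _).trans (by simp)
  rw [sum_const, card_univ, Fintype.card_fin, nsmul_eq_mul] at hcompl
  linarith

lemma eventually_half_pow_le_card_balancedColorings {k : ℕ} (hk : k ≠ 0) {M : ℝ} (hM : 1 < M) :
    ∀ᶠ n : ℕ in atTop, (k : ℝ) ^ n / 2 ≤ #(balancedColorings n k M) := by
  have hrate : 0 < InformationTheory.klFun M / k := div_pos (klFun_pos hM) (by positivity)
  have hlim : Tendsto (fun n : ℕ ↦ (k : ℝ) * exp (-(InformationTheory.klFun M / k * n))) atTop
      (nhds ((k : ℝ) * 0)) :=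
    (tendsto_exp_neg_atTop_nhds_zero.comp <|
      tendsto_natCast_atTop_atTop.const_mul_atTop hrate).const_mul _
  rw [mul_zero] at hlim
  filter_upwards [hlim.eventually_le_const one_half_pos] with n hn
  refine le_trans ?_ (pow_sub_le_card_balancedColorings n k hM.le)
  rw [div_eq_mul_inv]
  gcongr
  linarith

end Balanced

/-! ### Balanced proper colorings exist with probability at least `exp (-ρ n)` -/

section Existence

/-- The edge probability `d (r - 1)! / n ^ (r - 1)`, for which the average degree is about `d`. -/
noncomputable def edgeProb (r : ℕ) (d : ℝ) (n : ℕ) : ℝ :=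
  d * (r - 1).factorial / (n : ℝ) ^ (r - 1)

lemma tendsto_edgeProb {r : ℕ} (hr : 2 ≤ r) (d : ℝ) :
    Tendsto (edgeProb r d) atTop (nhds 0) :=
  (tendsto_const_div_pow _ (r - 1) (by lia)).comp tendsto_natCast_atTop_atTop

lemma edgeProb_nonneg {d : ℝ} (hd : 0 ≤ d) (r n : ℕ) : 0 ≤ edgeProb r d n := by
  unfold edgeProb
  positivity

lemma eventually_mul_pow_le_exp {C γ : ℝ} (hC : 0 < C) (hγ : 0 < γ) (m : ℕ) :
    ∀ᶠ n : ℕ in atTop, C * ((n : ℝ) + 1) ^ m ≤ exp (n * γ) := by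
  have hshift : Tendsto (fun n : ℕ ↦ (n : ℝ) + 1) atTop atTop :=
    tendsto_atTop_add_const_right _ _ tendsto_natCast_atTop_atTop
  filter_upwards [hshift.eventually <|
    (isLittleO_pow_exp_pos_mul_atTop m hγ).bound (c := (C * exp γ)⁻¹) (by positivity)] with n hn
  rw [norm_of_nonneg (by positivity), norm_of_nonneg (exp_pos _).le, mul_add_one γ, exp_add,
    ← div_eq_inv_mul, le_div_iff₀ (by positivity), ← mul_assoc] at hn
  rw [mul_comm C, mul_comm (n : ℝ)]
  exact le_of_mul_le_mul_right hn (exp_pos γ)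

lemma sum_sum_pair_le {ι β : Type*} [Fintype ι] [DecidableEq ι] [Fintype β] (S : Finset (ι → β))
    {g : (ι → β × β) → ℝ} (hg : ∀ f, 0 ≤ g f) :
    ∑ σ ∈ S, ∑ τ ∈ S, g (fun v ↦ (σ v, τ v)) ≤ ∑ f, g f := by
  rw [← sum_product', ← (Equiv.arrowProdEquivProdArrow ι (fun _ ↦ β) fun _ ↦ β).symm.sum_comp]
  exact sum_le_sum_of_subset_of_nonneg (subset_univ _) fun x _ _ ↦ hg _

lemma inv_one_sub_le_exp_mul {M p : ℝ} (hp : p ∈ Set.Ico (0 : ℝ) 1) (hM : M * p ≤ M - 1) :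
    (1 - p)⁻¹ ≤ exp (M * p) := by
  refine le_trans ?_ (add_one_le_exp _)
  rw [inv_le_iff_one_le_mul₀ (sub_pos.2 hp.2)]
  linarith [mul_nonneg hp.1 (sub_nonneg.2 hM)]

variable {r n k : ℕ} {d M : ℝ}

lemma sum_pow_card_monoEdges_le (hr : 3 ≤ r) (hn : n ≠ 0) (hlog : 4 ≤ log k) (hd : 0 ≤ d)
    (hM : 1 ≤ M) (hdM : M ^ r * (d / r) ≤ (log k - 2) * (k : ℝ) ^ (r - 1)) {q : ℝ} (hq : 0 ≤ q)
    (hqM : q ≤ exp (M * edgeProb r d n)) :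
    ∑ σ ∈ balancedColorings n k M, ∑ τ ∈ balancedColorings n k M,
        q ^ #(monoEdges r fun v ↦ (σ v, τ v)) ≤
      exp (n * (log k * exp 6 / (k : ℝ) ^ 2)) * ((k : ℝ) ^ 2) ^ n * ((n : ℝ) + 1) ^ (k * k) := by
  have hk : (0 : ℝ) < k := Nat.cast_pos.2 <| Nat.pos_of_ne_zero fun h ↦ by norm_num [h] at hlog
  have : NeZero n := ⟨hn⟩
  set Λ := M * (d / r) / (k : ℝ) ^ (r - 1) with hΛ
  have hΛM : Λ * M ^ (r - 1) ≤ log k - 2 := by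
    rw [hΛ, div_mul_eq_mul_div, div_le_iff₀ (by positivity), mul_right_comm,
      mul_pow_sub_one (by lia)]
    exact hdM
  have hqΛ : q ≤ exp (Λ * r.factorial * (k / n : ℝ) ^ (r - 1)) := by
    refine hqM.trans_eq (congrArg exp ?_)
    rw [hΛ, edgeProb, ← Nat.mul_factorial_pred (by lia : r ≠ 0), Nat.cast_mul, div_pow]
    field_simp
  have hlikelihood (f : Fin n → Fin k × Fin k) : 0 ≤ empiricalLikelihood f :=
    prod_nonneg fun v _ ↦ by positivity
  calc ∑ σ ∈ balancedColorings n k M, ∑ τ ∈ balancedColorings n k M,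
        q ^ #(monoEdges r fun v ↦ (σ v, τ v))
      ≤ ∑ σ ∈ balancedColorings n k M, ∑ τ ∈ balancedColorings n k M,
          exp (n * (log k * exp 6 / (k : ℝ) ^ 2)) *
            (((k : ℝ) ^ 2) ^ n * empiricalLikelihood fun v ↦ (σ v, τ v)) := by
        refine sum_le_sum fun σ hσ ↦ sum_le_sum fun τ _ ↦
          pow_card_monoEdges_le_empiricalLikelihood hr hn hlog (by positivity) hM hΛM hq hqΛ
            fun c ↦ le_trans ?_ (mem_balancedColorings.1 hσ c.1)
        exact Nat.cast_le.2 <| card_le_card fun v hv ↦ by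
          simpa using congrArg Prod.fst (mem_filter.1 hv).2
    _ ≤ ∑ f : Fin n → Fin k × Fin k, exp (n * (log k * exp 6 / (k : ℝ) ^ 2)) *
          (((k : ℝ) ^ 2) ^ n * empiricalLikelihood f) :=
        sum_sum_pair_le (g := fun f ↦ exp (n * (log k * exp 6 / (k : ℝ) ^ 2)) *
          (((k : ℝ) ^ 2) ^ n * empiricalLikelihood f)) _
          fun f ↦ mul_nonneg (exp_pos _).le (mul_nonneg (by positivity) (hlikelihood f))
    _ ≤ _ := by
        rw [← mul_sum, ← mul_sum, mul_assoc]
        gcongr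
        simpa using sum_empiricalLikelihood_le (ι := Fin n) (β := Fin k × Fin k)

lemma eventually_exp_le_subsetProb_balanced (hr : 3 ≤ r) (hlog : 4 ≤ log k) (hd : 0 ≤ d)
    (hM : 1 < M) (hdM : M ^ r * (d / r) ≤ (log k - 2) * (k : ℝ) ^ (r - 1)) :
    ∀ᶠ n : ℕ in atTop, exp (-(n * (2 * (log k * exp 6 / (k : ℝ) ^ 2)))) ≤
      subsetProb (edgeProb r d n) (edgeCandidates n r)
        fun E ↦ ∃ σ ∈ balancedColorings n k M, ProperColoring E σ := by
  have hk : (0 : ℝ) < k := Nat.cast_pos.2 <| Nat.pos_of_ne_zero fun h ↦ by norm_num [h] at hlog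
  set δ := log k * exp 6 / (k : ℝ) ^ 2
  have hδ : 0 < δ := by positivity
  have hpM : Tendsto (fun n ↦ M * edgeProb r d n) atTop (nhds 0) := by
    simpa using (tendsto_edgeProb (by lia : 2 ≤ r) d).const_mul M
  filter_upwards [eventually_ne_atTop 0,
    eventually_half_pow_le_card_balancedColorings (Nat.cast_ne_zero.1 hk.ne') hM,
    (tendsto_edgeProb (by lia : 2 ≤ r) d).eventually_lt_const one_pos,
    hpM.eventually_le_const (sub_pos.2 hM),
    eventually_mul_pow_le_exp four_pos hδ (k * k)] with n hn hcard hp₁ hpM hpoly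
  have hp : edgeProb r d n ∈ Set.Ico 0 1 := ⟨edgeProb_nonneg hd r n, hp₁⟩
  have hsecond := sq_card_le_sum_mul_subsetProb_properColoring (r := r) hp
    (balancedColorings n k M)
  have hsum := sum_pow_card_monoEdges_le hr hn hlog hd hM.le hdM
    (inv_nonneg.2 (sub_nonneg.2 hp₁.le)) (inv_one_sub_le_exp_mul hp hpM)
  set P := subsetProb (edgeProb r d n) (edgeCandidates n r)
    fun E ↦ ∃ σ ∈ balancedColorings n k M, ProperColoring E σ
  have hP : 0 ≤ P := subsetProb_nonneg (Set.Ico_subset_Icc_self hp) _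
  have hone : (k ^ n : ℝ) ^ 2 * 1 ≤ (k ^ n : ℝ) ^ 2 * (exp (n * (2 * δ)) * P) := by
    calc (k ^ n : ℝ) ^ 2 * 1 = 4 * ((k : ℝ) ^ n / 2) ^ 2 := by ring
      _ ≤ 4 * (#(balancedColorings n k M) : ℝ) ^ 2 := by gcongr
      _ ≤ 4 * (exp (n * δ) * ((k : ℝ) ^ 2) ^ n * ((n : ℝ) + 1) ^ (k * k) * P) := by
          gcongr
          exact hsecond.trans (mul_le_mul_of_nonneg_right hsum hP)
      _ = (k ^ n : ℝ) ^ 2 * (exp (n * δ) * (4 * ((n : ℝ) + 1) ^ (k * k)) * P) := by ring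
      _ ≤ (k ^ n : ℝ) ^ 2 * (exp (n * δ) * exp (n * δ) * P) := by gcongr
      _ = (k ^ n : ℝ) ^ 2 * (exp (n * (2 * δ)) * P) := by
          rw [← exp_add, ← two_mul, mul_left_comm (n : ℝ)]
  rw [exp_neg, inv_le_iff_one_le_mul₀' (exp_pos _)]
  exact le_of_mul_le_mul_left hone (by positivity)

end Existence

/-! ### Deleting few vertices -/

section Deletion

variable {n k : ℕ} {S : Finset (Fin n → Fin k)} {U E : Finset (Finset (Fin n))}

/-- The least number of vertices whose deletion leaves a hypergraph for which some coloring from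
`S` is proper; it has the junk value `0` when there is no such set of vertices. -/
noncomputable def deletionNumber (S : Finset (Fin n → Fin k)) (E : Finset (Finset (Fin n))) : ℕ :=
  sInf {m | ∃ W : Finset (Fin n), #W = m ∧ ∃ σ ∈ S, ProperColoring {e ∈ E | Disjoint e W} σ}

lemma exists_card_eq_deletionNumber (hS : S.Nonempty) (hE : ∀ e ∈ E, e.Nonempty) :
    ∃ W : Finset (Fin n), #W = deletionNumber S E ∧
      ∃ σ ∈ S, ProperColoring {e ∈ E | Disjoint e W} σ := by
  obtain ⟨σ, hσ⟩ := hS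
  refine Nat.sInf_mem (s := {m | ∃ W : Finset (Fin n), #W = m ∧
    ∃ σ ∈ S, ProperColoring {e ∈ E | Disjoint e W} σ}) ⟨_, univ, rfl, σ, hσ, fun e he ↦ ?_⟩
  obtain ⟨heE, hdisj⟩ := mem_filter.1 he
  obtain ⟨v, hv⟩ := hE e heE
  exact absurd (mem_univ v) (disjoint_left.1 hdisj hv)

lemma deletionNumber_le {σ : Fin n → Fin k} (hσ : σ ∈ S) {W : Finset (Fin n)}
    (hW : ProperColoring {e ∈ E | Disjoint e W} σ) : deletionNumber S E ≤ #W :=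
  Nat.sInf_le ⟨W, rfl, σ, hσ, hW⟩

lemma deletionNumber_le_add_one (hS : S.Nonempty) (hU : ∀ e ∈ U, e.Nonempty) (hE : E ⊆ U)
    {A : Finset (Finset (Fin n))} {v : Fin n} (hA : ∀ e ∈ A, v ∉ e → e ∈ E) :
    deletionNumber S A ≤ deletionNumber S E + 1 := by
  obtain ⟨W, hW, σ, hσ, hproper⟩ := exists_card_eq_deletionNumber hS fun e he ↦ hU e (hE he)
  rw [← hW]
  refine (deletionNumber_le hσ (W := insert v W) fun e he ↦ ?_).trans (card_insert_le _ _)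
  obtain ⟨heA, hdisj⟩ := mem_filter.1 he
  rw [disjoint_insert_right] at hdisj
  exact hproper e (mem_filter.2 ⟨hA e heA hdisj.1, hdisj.2⟩)

-- All edges with label `v` contain `v`, so deleting `v` as well undoes any change of them.
lemma hasBoundedDifferences_deletionNumber (hS : S.Nonempty) {b : Finset (Fin n) → Fin n}
    (hb : ∀ e ∈ U, b e ∈ e) :
    HasBoundedDifferences b U (fun E ↦ (deletionNumber S E : ℝ)) fun _ ↦ 1 := by
  intro v A hA B hB hAB
  have hU : ∀ e ∈ U, e.Nonempty := fun e he ↦ ⟨b e, hb e he⟩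
  have hne {e} (he : e ∈ U) (hv : v ∉ e) : b e ≠ v := fun h ↦ hv (h ▸ hb e he)
  have hAle : deletionNumber S A ≤ deletionNumber S B + 1 :=
    deletionNumber_le_add_one hS hU hB fun e he hv ↦ (hAB e (hne (hA he) hv)).1 he
  have hBle : deletionNumber S B ≤ deletionNumber S A + 1 :=
    deletionNumber_le_add_one hS hU hA fun e he hv ↦ (hAB e (hne (hB he) hv)).2 he
  simp only [abs_sub_le_iff, sub_le_iff_le_add, add_comm (1 : ℝ)]
  exact ⟨by exact_mod_cast hAle, by exact_mod_cast hBle⟩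

lemma subsetProb_not_exists_deletion_le (hn : n ≠ 0) {p ρ : ℝ} (hp : p ∈ Set.Icc (0 : ℝ) 1)
    (hρ : 0 ≤ ρ) (hU : ∀ e ∈ U, e.Nonempty)
    (hS : exp (-(n * ρ)) ≤ subsetProb p U fun E ↦ ∃ σ ∈ S, ProperColoring E σ) :
    subsetProb p U (fun E ↦ ¬∃ W : Finset (Fin n), (#W : ℝ) ≤ 2 * √(2 * ρ) * n ∧
      ∃ σ ∈ S, ProperColoring {e ∈ E | Disjoint e W} σ) ≤ exp (-(n * ρ)) := by
  have hn₀ : (0 : ℝ) < n := by positivity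
  have hSne : S.Nonempty := by
    by_contra! rfl
    refine hS.not_gt ?_
    simpa [subsetProb, subsetExpect_const] using exp_pos _
  obtain ⟨b, hb⟩ : ∃ b : Finset (Fin n) → Fin n, ∀ e ∈ U, b e ∈ e := by
    have : Nonempty (Fin n) := ⟨⟨0, Nat.pos_of_ne_zero hn⟩⟩
    choose! b hb using hU
    exact ⟨b, hb⟩
  set t := √(2 * ρ) * n with ht
  have hexponent : t ^ 2 / (2 * ∑ _v : Fin n, (1 : ℝ) ^ 2) = n * ρ := by
    rw [ht, mul_pow, sq_sqrt (by positivity)]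
    simp only [one_pow, sum_const, card_univ, Fintype.card_fin, nsmul_eq_mul, mul_one]
    field_simp
  have htail := (hasBoundedDifferences_deletionNumber hSne hb).subsetProb_two_mul_le hp
    (by simpa using hn₀) (t := t) (by positivity) (by
      rw [hexponent]
      refine hS.trans (subsetProb_mono hp fun E _ ↦ ?_)
      rintro ⟨σ, hσ, hproper⟩
      exact_mod_cast deletionNumber_le hσ (W := ∅) fun e he ↦ hproper e (mem_filter.1 he).1)
  rw [hexponent] at htail
  refine (subsetProb_mono hp fun E hE hbad ↦ ?_).trans htail
  by_contra! hlt
  obtain ⟨W, hW, hσ⟩ := exists_card_eq_deletionNumber hSne fun e he ↦ hU e (hE he)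
  refine hbad ⟨W, ?_, hσ⟩
  rw [hW]
  linarith

end Deletion

/-! ### Small vertex sets span few edges -/

section Sparse

variable {n r s : ℕ} {c d δ : ℝ}

/-- Every nonempty set `W` of at most `m` vertices spans fewer than `c * #W` edges. -/
def IsLocallySparse (c m : ℝ) (E : Finset (Finset (Fin n))) : Prop :=
  ∀ W : Finset (Fin n), W.Nonempty → (#W : ℝ) ≤ m → (#{e ∈ E | e ⊆ W} : ℝ) < c * #W

lemma choose_le_exp (hs : s ≠ 0) (hn : n ≠ 0) :
    (n.choose s : ℝ) ≤ exp (s * (1 + log (n / s))) := by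
  calc (n.choose s : ℝ) ≤ (n : ℝ) ^ s / s.factorial := Nat.choose_le_pow_div s n
    _ = (s : ℝ) ^ s / s.factorial * ((n : ℝ) / s) ^ s := by
        rw [div_pow]
        field_simp
    _ ≤ exp s * ((n : ℝ) / s) ^ s := by
        gcongr
        exact pow_div_factorial_le_exp _ (by positivity) s
    _ = exp (s * (1 + log (n / s))) := by
        rw [mul_add, exp_add, mul_one, exp_nat_mul (log _), exp_log (by positivity)]

lemma edgeProb_mul_choose_le (hr : r ≠ 0) (hd : 0 ≤ d) :
    edgeProb r d n * s.choose r ≤ d / r * ((s : ℝ) / n) ^ (r - 1) * s := by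
  calc edgeProb r d n * s.choose r ≤ edgeProb r d n * ((s : ℝ) ^ r / r.factorial) :=
        mul_le_mul_of_nonneg_left (Nat.choose_le_pow_div r s) (edgeProb_nonneg hd r n)
    _ = d / r * ((s : ℝ) / n) ^ (r - 1) * s := by
        rw [edgeProb, ← Nat.mul_factorial_pred hr, ← pow_sub_one_mul hr, div_pow]
        push_cast
        field_simp

lemma subsetProb_le_card_filter_subset_le {p : ℝ} (hp : p ∈ Set.Icc (0 : ℝ) 1)
    (W : Finset (Fin n)) {t : ℝ} (ht : 1 ≤ t) (x : ℝ) :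
    subsetProb p (edgeCandidates n r) (fun E ↦ x ≤ #{e ∈ E | e ⊆ W}) ≤
      exp (-(log t * x) + p * t * (#W).choose r) := by
  have hsub : W.powersetCard r ⊆ edgeCandidates n r := fun e he ↦
    mem_edgeCandidates.2 (mem_powersetCard.1 he).2
  have hinter : ∀ E ⊆ edgeCandidates n r, {e ∈ E | e ⊆ W} = E ∩ W.powersetCard r := by
    intro E hE
    ext e
    simp only [mem_filter, mem_inter, mem_powersetCard]
    exact and_congr_right fun he ↦ (and_iff_left (mem_edgeCandidates.1 (hE he))).symm
  have hchernoff := subsetProb_le_card_inter_le hp hsub (log_nonneg ht) x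
  rw [exp_log (by linarith), card_powersetCard] at hchernoff
  exact (subsetProb_mono hp fun E hE h ↦ by rwa [← hinter E hE]).trans hchernoff

-- Chernoff's bound with `t` the ratio between the threshold `c * #W` and the expected number of
-- edges inside `W`.
lemma subsetProb_mul_card_le_card_filter_subset_le (hr : r ≠ 0) (hd : 0 < d)
    (hp : edgeProb r d n ∈ Set.Icc (0 : ℝ) 1) {W : Finset (Fin n)} (hW : W.Nonempty)
    (ht : 1 ≤ c * r / d * ((n : ℝ) / #W) ^ (r - 1)) :
    subsetProb (edgeProb r d n) (edgeCandidates n r) (fun E ↦ c * #W ≤ #{e ∈ E | e ⊆ W}) ≤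
      exp (-(c * #W * (log (c * r / d * ((n : ℝ) / #W) ^ (r - 1)) - 1))) := by
  set t := c * r / d * ((n : ℝ) / #W) ^ (r - 1) with ht_def
  have hW₀ : (0 : ℝ) < #W := Nat.cast_pos.2 hW.card_pos
  have hn₀ : (0 : ℝ) < n := hW₀.trans_le (by simpa using card_le_univ W)
  have hmean : edgeProb r d n * t * (#W).choose r ≤ c * #W := by
    calc edgeProb r d n * t * (#W).choose r = t * (edgeProb r d n * (#W).choose r) := by ring
      _ ≤ t * (d / r * ((#W : ℝ) / n) ^ (r - 1) * #W) :=
          mul_le_mul_of_nonneg_left (edgeProb_mul_choose_le hr hd.le) (zero_le_one.trans ht)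
      _ = c * #W := by
          rw [ht_def, div_pow, div_pow]
          field_simp
  refine (subsetProb_le_card_filter_subset_le hp W ht _).trans (exp_le_exp.2 ?_)
  linarith

lemma two_add_two_mul_log_le (hr : 3 ≤ r) (hd : 0 < d) (hδ : 0 < δ)
    (hcd : exp 2 * d * δ ^ (r - 1) ≤ c * r) {x : ℝ} (hx : 1 ≤ δ * x) :
    2 + 2 * log (δ * x) ≤ log (c * r / d * x ^ (r - 1)) := by
  have hcr : 0 < c * r := (by positivity : 0 < exp 2 * d * δ ^ (r - 1)).trans_le hcd
  have hsplit : c * r / d * x ^ (r - 1) = c * r / (d * δ ^ (r - 1)) * (δ * x) ^ (r - 1) := by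
    rw [mul_pow]
    field_simp
  have hconst : 2 ≤ log (c * r / (d * δ ^ (r - 1))) := by
    rw [le_log_iff_exp_le (by positivity), le_div_iff₀ (by positivity), ← mul_assoc]
    exact hcd
  have hx₀ : 0 < δ * x := zero_lt_one.trans_le hx
  rw [hsplit, log_mul (by positivity) (pow_pos hx₀ _).ne', log_pow]
  have hexponent : (2 : ℝ) ≤ (r - 1 : ℕ) := by exact_mod_cast (by lia : 2 ≤ r - 1)
  gcongr
  exact log_nonneg hx

lemma two_add_log_inv_add_four_mul_log_le (hr : 3 ≤ r) (hd : 0 < d) (hδ : 0 < δ) (hc : 2 ≤ c)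
    (hcδ : 2 + log δ⁻¹ ≤ c) (hcd : exp 2 * d * δ ^ (r - 1) ≤ c * r) {x : ℝ} (hx : 1 ≤ δ * x) :
    2 + log δ⁻¹ + 4 * log (δ * x) ≤ c * (log (c * r / d * x ^ (r - 1)) - 1) := by
  calc 2 + log δ⁻¹ + 4 * log (δ * x) ≤ c * (1 + 2 * log (δ * x)) := by
        linarith [mul_le_mul_of_nonneg_right hc (mul_nonneg zero_le_two (log_nonneg hx))]
    _ ≤ c * (log (c * r / d * x ^ (r - 1)) - 1) := by
        gcongr
        linarith [two_add_two_mul_log_le hr hd hδ hcd hx]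

lemma cube_le_six_mul_exp {x : ℝ} (hx : 0 ≤ x) : x ^ 3 ≤ 6 * exp x := by
  have hexp := pow_div_factorial_le_exp x hx 3
  rwa [div_le_iff₀' (by positivity)] at hexp

lemma choose_mul_exp_le (hr : 3 ≤ r) (hd : 0 < d) (hδ : 0 < δ) (hc : 2 ≤ c)
    (hcδ : 2 + log δ⁻¹ ≤ c) (hcd : exp 2 * d * δ ^ (r - 1) ≤ c * r) (hs : s ≠ 0)
    (hsn : s ≤ δ * n) :
    n.choose s * exp (-(c * s * (log (c * r / d * ((n : ℝ) / s) ^ (r - 1)) - 1))) ≤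
      6 / (δ * n) ^ 3 := by
  have hs₁ : (1 : ℝ) ≤ s := by exact_mod_cast Nat.one_le_iff_ne_zero.2 hs
  have hn : n ≠ 0 := by
    rintro rfl
    rw [Nat.cast_zero, mul_zero] at hsn
    linarith
  set ℓ := log (δ * (n / s)) with hℓ_def
  have hratio : 1 ≤ δ * ((n : ℝ) / s) := by rwa [← mul_div_assoc, one_le_div (by positivity)]
  have hℓ : 0 ≤ ℓ := log_nonneg hratio
  have hlog : log ((n : ℝ) / s) = log δ⁻¹ + ℓ := by
    rw [hℓ_def, log_mul hδ.ne' (by positivity), log_inv, neg_add_cancel_left]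
  have hrate : 2 + log δ⁻¹ + 4 * ℓ ≤ c * (log (c * r / d * ((n : ℝ) / s) ^ (r - 1)) - 1) :=
    two_add_log_inv_add_four_mul_log_le hr hd hδ hc hcδ hcd hratio
  calc n.choose s * exp (-(c * s * (log (c * r / d * ((n : ℝ) / s) ^ (r - 1)) - 1)))
      ≤ exp (s * (1 + log (n / s))) *
          exp (-(c * s * (log (c * r / d * ((n : ℝ) / s) ^ (r - 1)) - 1))) := by
        gcongr
        exact choose_le_exp hs hn
    _ ≤ exp (-s + (3 : ℕ) * -ℓ) := by
        rw [← exp_add, hlog]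
        refine exp_le_exp.2 ?_
        push_cast
        linarith [mul_le_mul_of_nonneg_left hrate s.cast_nonneg, mul_le_mul_of_nonneg_right hs₁ hℓ]
    _ = (exp s)⁻¹ * (s ^ 3 / (δ * n) ^ 3) := by
        rw [exp_add, exp_nat_mul, exp_neg, exp_neg, exp_log (by positivity), ← div_pow]
        field_simp
    _ ≤ 6 / (δ * n) ^ 3 := by
        rw [← mul_div_assoc]
        gcongr
        rw [inv_mul_le_iff₀ (exp_pos _), mul_comm]
        exact cube_le_six_mul_exp s.cast_nonneg

lemma subsetProb_exists_card_eq_le (hr : 3 ≤ r) (hd : 0 < d) (hδ : 0 < δ) (hc : 2 ≤ c)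
    (hcδ : 2 + log δ⁻¹ ≤ c) (hcd : exp 2 * d * δ ^ (r - 1) ≤ c * r)
    (hp : edgeProb r d n ∈ Set.Icc (0 : ℝ) 1) (hs : s ≠ 0) (hsn : s ≤ δ * n) :
    subsetProb (edgeProb r d n) (edgeCandidates n r)
      (fun E ↦ ∃ W ∈ powersetCard s univ, c * #W ≤ #{e ∈ E | e ⊆ W}) ≤ 6 / (δ * n) ^ 3 := by
  have hs₀ : (0 : ℝ) < s := by positivity
  have hn₀ : (0 : ℝ) < n := pos_of_mul_pos_right (hs₀.trans_le hsn) hδ.le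
  have hratio : 1 ≤ δ * ((n : ℝ) / s) := by rwa [← mul_div_assoc, one_le_div hs₀]
  have hlog := two_add_two_mul_log_le hr hd hδ hcd hratio
  have ht : 1 ≤ c * r / d * ((n : ℝ) / s) ^ (r - 1) :=
    (log_nonneg_iff (by positivity)).1 (by linarith [log_nonneg hratio])
  calc subsetProb (edgeProb r d n) (edgeCandidates n r)
        (fun E ↦ ∃ W ∈ powersetCard s univ, c * #W ≤ #{e ∈ E | e ⊆ W})
      ≤ ∑ W ∈ powersetCard s (univ : Finset (Fin n)),
          exp (-(c * s * (log (c * r / d * ((n : ℝ) / s) ^ (r - 1)) - 1))) := by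
        refine (subsetProb_exists_le hp _ _).trans (sum_le_sum fun W hW ↦ ?_)
        obtain rfl : #W = s := (mem_powersetCard.1 hW).2
        exact subsetProb_mul_card_le_card_filter_subset_le (by lia) hd hp (card_ne_zero.1 hs) ht
    _ ≤ 6 / (δ * n) ^ 3 := by
        rw [sum_const, card_powersetCard, card_univ, Fintype.card_fin, nsmul_eq_mul]
        exact choose_mul_exp_le hr hd hδ hc hcδ hcd hs hsn

lemma subsetProb_not_isLocallySparse_le (hr : 3 ≤ r) (hd : 0 < d) (hδ : 0 < δ) (hc : 2 ≤ c)
    (hcδ : 2 + log δ⁻¹ ≤ c) (hcd : exp 2 * d * δ ^ (r - 1) ≤ c * r)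
    (hp : edgeProb r d n ∈ Set.Icc (0 : ℝ) 1) :
    subsetProb (edgeProb r d n) (edgeCandidates n r) (fun E ↦ ¬IsLocallySparse c (δ * n) E) ≤
      n * (6 / (δ * n) ^ 3) := by
  set T : Finset ℕ := {s ∈ Icc 1 n | (s : ℝ) ≤ δ * n} with hT
  calc subsetProb (edgeProb r d n) (edgeCandidates n r) (fun E ↦ ¬IsLocallySparse c (δ * n) E)
      ≤ ∑ s ∈ T, subsetProb (edgeProb r d n) (edgeCandidates n r)
          (fun E ↦ ∃ W ∈ powersetCard s univ, c * #W ≤ #{e ∈ E | e ⊆ W}) := by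
        refine (subsetProb_mono hp fun E _ hE ↦ ?_).trans (subsetProb_exists_le hp T _)
        simp only [IsLocallySparse] at hE
        push Not at hE
        obtain ⟨W, hWne, hWn, hW⟩ := hE
        refine ⟨#W, mem_filter.2 ⟨mem_Icc.2 ⟨hWne.card_pos, ?_⟩, hWn⟩, W, ?_, hW⟩
        · simpa using card_le_univ W
        · exact mem_powersetCard.2 ⟨subset_univ _, rfl⟩
    _ ≤ ∑ _s ∈ T, 6 / (δ * n) ^ 3 := sum_le_sum fun s hs ↦ by
        obtain ⟨hs_mem, hsn⟩ := mem_filter.1 hs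
        exact subsetProb_exists_card_eq_le hr hd hδ hc hcδ hcd hp
          (Nat.one_le_iff_ne_zero.1 (mem_Icc.1 hs_mem).1) hsn
    _ ≤ n * (6 / (δ * n) ^ 3) := by
        rw [sum_const, nsmul_eq_mul]
        gcongr
        simpa [hT] using card_filter_le (Icc 1 n) fun s : ℕ ↦ (s : ℝ) ≤ δ * n

end Sparse

/-! ### Coloring the deleted vertices -/

section Greedy

variable {n D : ℕ} {E : Finset (Finset (Fin n))} {W : Finset (Fin n)}

lemma exists_card_filter_mem_lt {r c : ℕ} (hr : r ≠ 0) (hE : ∀ e ∈ E, #e ≤ r)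
    (hW : #{e ∈ E | e ⊆ W} < c * #W) : ∃ v ∈ W, #{e ∈ E | e ⊆ W ∧ v ∈ e} < r * c := by
  refine exists_lt_of_sum_lt (s := W) (g := fun _ ↦ r * c) ?_
  calc ∑ v ∈ W, #{e ∈ E | e ⊆ W ∧ v ∈ e}
      = ∑ e ∈ E with e ⊆ W, #{v ∈ W | v ∈ e} := by
        simp only [← filter_filter]
        exact sum_card_bipartiteAbove_eq_sum_card_bipartiteBelow fun v e ↦ v ∈ e
    _ ≤ #{e ∈ E | e ⊆ W} * r := by
        refine sum_le_card_nsmul _ _ _ fun e he ↦ ?_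
        rw [filter_mem_eq_inter]
        exact (card_le_card inter_subset_right).trans (hE e (mem_filter.1 he).1)
    _ < c * #W * r := Nat.mul_lt_mul_of_pos_right hW (Nat.pos_of_ne_zero hr)
    _ = ∑ _v ∈ W, r * c := by
        rw [sum_const, smul_eq_mul]
        ring

lemma exists_properColoring_update {v : Fin n} (hE : ∀ e ∈ E, 2 ≤ #e)
    (hv : #{e ∈ E | e ⊆ W ∧ v ∈ e} < D) {g : Fin n → Fin D}
    (hg : ProperColoring {e ∈ E | e ⊆ W.erase v} g) :
    ∃ x, ProperColoring {e ∈ E | e ⊆ W} (Function.update g v x) := by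
  have hother : ∀ e ∈ E, ∃ w ∈ e, w ≠ v := fun e he ↦ exists_mem_ne (hE e he) v
  have : Nonempty (Fin n) := ⟨v⟩
  choose! w hw hwv using hother
  obtain ⟨x, hx⟩ : ∃ x, x ∉ image (fun e ↦ g (w e)) {e ∈ E | e ⊆ W ∧ v ∈ e} := by
    by_contra! hall
    refine hv.not_ge ((Fintype.card_fin D).symm.le.trans ?_)
    exact (card_le_card fun y _ ↦ hall y).trans card_image_le
  refine ⟨x, fun e he ↦ ?_⟩
  obtain ⟨heE, heW⟩ := mem_filter.1 he
  by_cases hve : v ∈ e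
  · refine ⟨v, hve, w e, hw e heE, ?_⟩
    rw [Function.update_self, Function.update_of_ne (hwv e heE)]
    rintro rfl
    exact hx (mem_image_of_mem _ (mem_filter.2 ⟨heE, heW, hve⟩))
  · obtain ⟨a, ha, b, hb, hab⟩ := hg e (mem_filter.2 ⟨heE, subset_erase.2 ⟨heW, hve⟩⟩)
    refine ⟨a, ha, b, hb, ?_⟩
    rwa [Function.update_of_ne (ne_of_mem_of_not_mem ha hve),
      Function.update_of_ne (ne_of_mem_of_not_mem hb hve)]

lemma exists_properColoring_of_degenerate (hD : D ≠ 0) (hE : ∀ e ∈ E, 2 ≤ #e)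
    (hW : ∀ W' ⊆ W, W'.Nonempty → ∃ v ∈ W', #{e ∈ E | e ⊆ W' ∧ v ∈ e} < D) :
    ∃ g : Fin n → Fin D, ProperColoring {e ∈ E | e ⊆ W} g := by
  induction W using Finset.strongInduction with
  | H W ih =>
    rcases W.eq_empty_or_nonempty with rfl | hne
    · refine ⟨fun _ ↦ ⟨0, Nat.pos_of_ne_zero hD⟩, fun e he ↦ ?_⟩
      obtain ⟨heE, hempty⟩ := mem_filter.1 he
      have := hE e heE
      simp [subset_empty.1 hempty] at this
    · obtain ⟨v, hvW, hv⟩ := hW W Subset.rfl hne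
      obtain ⟨g, hg⟩ := ih (W.erase v) (erase_ssubset hvW) fun W' hW' ↦
        hW W' (hW'.trans (erase_subset _ _))
      obtain ⟨x, hx⟩ := exists_properColoring_update hE hv hg
      exact ⟨_, hx⟩

lemma exists_card_filter_eq_le {ι : Type*} (W : Finset ι) {m q : ℕ} (hq : q ≠ 0)
    (hW : #W ≤ q * m) : ∃ f : ι → Fin q, ∀ j, #{v ∈ W | f v = j} ≤ m := by
  obtain ⟨φ⟩ : Nonempty (W ↪ Fin q × Fin m) :=
    Function.Embedding.nonempty_of_card_le (by simpa using hW)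
  refine ⟨fun v ↦ if hv : v ∈ W then (φ ⟨v, hv⟩).1 else ⟨0, Nat.pos_of_ne_zero hq⟩, fun j ↦ ?_⟩
  calc #{v ∈ W | (if hv : v ∈ W then (φ ⟨v, hv⟩).1 else ⟨0, Nat.pos_of_ne_zero hq⟩) = j}
      ≤ #(image Subtype.val {w : W | (φ w).1 = j}) := by
        refine card_le_card fun v hv ↦ ?_
        obtain ⟨hvW, hvj⟩ := mem_filter.1 hv
        rw [dif_pos hvW] at hvj
        exact mem_image.2 ⟨⟨v, hvW⟩, mem_filter.2 ⟨mem_univ _, hvj⟩, rfl⟩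
    _ ≤ #{w : W | (φ w).1 = j} := card_image_le
    _ ≤ #(univ : Finset (Fin m)) := by
        refine card_le_card_of_injOn (fun w ↦ (φ w).2) (fun _ _ ↦ mem_univ _) ?_
        intro u hu w hw huw
        refine φ.injective (Prod.ext ?_ huw)
        rw [(mem_filter.1 (mem_coe.1 hu)).2, (mem_filter.1 (mem_coe.1 hw)).2]
    _ = m := Fintype.card_fin m

lemma exists_properColoring_sum {k l M : ℕ} {σ : Fin n → Fin k} {τ : Fin n → Fin l}
    (hσ : ProperColoring {e ∈ E | Disjoint e W} σ) (hτ : ProperColoring {e ∈ E | e ⊆ W} τ)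
    (hσM : ∀ i, fiberCard σ i ≤ M) (hτM : ∀ j, #{v ∈ W | τ v = j} ≤ M) :
    ∃ f : Fin n → Fin (k + l), ProperColoring E f ∧ ∀ i, fiberCard f i ≤ M := by
  set f : Fin n → Fin (k + l) := fun v ↦
    if v ∈ W then Fin.natAdd k (τ v) else Fin.castAdd l (σ v)
  have hmem {v} (hv : v ∈ W) : f v = Fin.natAdd k (τ v) := if_pos hv
  have hnot_mem {v} (hv : v ∉ W) : f v = Fin.castAdd l (σ v) := if_neg hv
  have hne (x : Fin k) (y : Fin l) : Fin.castAdd l x ≠ Fin.natAdd k y :=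
    Fin.ne_of_val_ne (x.isLt.trans_le (Nat.le_add_right k y)).ne
  refine ⟨f, fun e he ↦ ?_, fun i ↦ ?_⟩
  · by_cases hsub : e ⊆ W
    · obtain ⟨v, hv, w, hw, hvw⟩ := hτ e (mem_filter.2 ⟨he, hsub⟩)
      refine ⟨v, hv, w, hw, ?_⟩
      rw [hmem (hsub hv), hmem (hsub hw)]
      exact (Fin.natAdd_injective _ _).ne hvw
    · by_cases hdisj : Disjoint e W
      · obtain ⟨v, hv, w, hw, hvw⟩ := hσ e (mem_filter.2 ⟨he, hdisj⟩)
        refine ⟨v, hv, w, hw, ?_⟩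
        rw [hnot_mem (disjoint_left.1 hdisj hv), hnot_mem (disjoint_left.1 hdisj hw)]
        exact (Fin.castAdd_injective _ _).ne hvw
      · obtain ⟨v, hv, hvW⟩ := not_subset.1 hsub
        obtain ⟨w, hw, hwW⟩ := not_disjoint_iff.1 hdisj
        refine ⟨v, hv, w, hw, ?_⟩
        rw [hnot_mem hvW, hmem hwW]
        exact hne _ _
  · induction i using Fin.addCases with
    | left x =>
      refine (card_le_card fun v hv ↦ ?_).trans (hσM x)
      rw [mem_filter_univ] at hv ⊢
      by_cases hvW : v ∈ W
      · exact absurd ((hmem hvW).symm.trans hv).symm (hne _ _)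
      · exact Fin.castAdd_injective _ _ ((hnot_mem hvW).symm.trans hv)
    | right y =>
      refine (card_le_card fun v hv ↦ ?_).trans (hτM y)
      rw [mem_filter_univ] at hv
      by_cases hvW : v ∈ W
      · exact mem_filter.2 ⟨hvW, Fin.natAdd_injective _ _ ((hmem hvW).symm.trans hv)⟩
      · exact absurd ((hnot_mem hvW).symm.trans hv) (hne _ _)

-- The greedy color classes of the deleted set `W` are cut into `q` pieces each to be balanced.
lemma exists_balanced_properColoring {r c k q M : ℕ} (hr : 2 ≤ r) (hc : c ≠ 0) (hq : q ≠ 0)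
    (hE : ∀ e ∈ E, #e = r) {m : ℝ} (hsparse : IsLocallySparse c m E) (hWm : #W ≤ m)
    (hWq : #W ≤ q * M) {σ : Fin n → Fin k} (hσ : ProperColoring {e ∈ E | Disjoint e W} σ)
    (hσM : ∀ i, fiberCard σ i ≤ M) :
    ∃ f : Fin n → Fin (k + r * c * q), ProperColoring E f ∧ ∀ i, fiberCard f i ≤ M := by
  have hr₀ : r ≠ 0 := by lia
  obtain ⟨g, hg⟩ := exists_properColoring_of_degenerate (D := r * c) (mul_ne_zero hr₀ hc)
    (fun e he ↦ (hE e he).symm ▸ hr) (W := W) fun W' hW' hne ↦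
      exists_card_filter_mem_lt hr₀ (fun e he ↦ (hE e he).le) <| by
        exact_mod_cast hsparse W' hne ((Nat.cast_le.2 (card_le_card hW')).trans hWm)
  obtain ⟨piece, hpiece⟩ := exists_card_filter_eq_le W hq hWq
  refine exists_properColoring_sum (τ := fun v ↦ finProdFinEquiv (g v, piece v)) hσ
    (fun e he ↦ ?_) hσM fun j ↦ ?_
  · obtain ⟨v, hv, w, hw, hvw⟩ := hg e he
    exact ⟨v, hv, w, hw, finProdFinEquiv.injective.ne fun h ↦ hvw (congrArg Prod.fst h)⟩
  · refine (card_le_card fun v hv ↦ ?_).trans (hpiece (finProdFinEquiv.symm j).2)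
    obtain ⟨hvW, rfl⟩ := mem_filter.1 hv
    exact mem_filter.2 ⟨hvW, by rw [Equiv.symm_apply_apply]⟩

end Greedy

/-! ### Edges meeting a vertex set in a prescribed number of vertices -/

section Meeting

variable {n r j : ℕ} {a d : ℝ}

/-- The bound `κ_j = (10 d / r) C(r, j) a ^ j`, ten times the expected number of edges, per vertex,
that meet a set of `a n` vertices in exactly `j` vertices. -/
noncomputable def meetingBound (r : ℕ) (d a : ℝ) (j : ℕ) : ℝ :=
  10 * d / r * r.choose j * a ^ j

/-- For every set `A` of at most `m` vertices and every `1 ≤ j < r`, fewer than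
`meetingBound r d a j * n` edges meet `A` in exactly `j` vertices. Unlike `HasGoodColoring`, this
is a property of all small vertex sets, so that it does not depend on a coloring. -/
def HasFewMeetingEdges (r : ℕ) (d a m : ℝ) (E : Finset (Finset (Fin n))) : Prop :=
  ∀ A : Finset (Fin n), (#A : ℝ) ≤ m → ∀ j, 1 ≤ j → j ≤ r - 1 →
    (#{e ∈ E | #(e ∩ A) = j} : ℝ) < meetingBound r d a j * n

lemma card_filter_card_inter_eq_le (hj : j ≤ r) (A : Finset (Fin n)) :
    #{e ∈ edgeCandidates n r | #(e ∩ A) = j} ≤ (#A).choose j * n.choose (r - j) := by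
  calc #{e ∈ edgeCandidates n r | #(e ∩ A) = j}
      ≤ #(A.powersetCard j ×ˢ (univ : Finset (Fin n)).powersetCard (r - j)) := by
        refine card_le_card_of_injOn (fun e ↦ (e ∩ A, e \ A)) (fun e he ↦ ?_) fun e _ e' _ h ↦ ?_
        · obtain ⟨he_card, hej⟩ := mem_filter.1 he
          rw [mem_edgeCandidates] at he_card
          have hsplit := card_inter_add_card_sdiff e A
          refine mem_product.2 ⟨mem_powersetCard.2 ⟨inter_subset_right, hej⟩,
            mem_powersetCard.2 ⟨subset_univ _, ?_⟩⟩
          dsimp only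
          lia
        · rw [Prod.mk.injEq] at h
          rw [← sdiff_union_inter e A, ← sdiff_union_inter e' A, h.1, h.2]
    _ = (#A).choose j * n.choose (r - j) := by
        rw [card_product, card_powersetCard, card_powersetCard, card_univ, Fintype.card_fin]

lemma edgeProb_mul_card_filter_card_inter_eq_le (hr : r ≠ 0) (hd : 0 ≤ d) (ha : 0 ≤ a)
    (hj : j ≤ r) {A : Finset (Fin n)} (hA : #A ≤ a * n) :
    edgeProb r d n * #{e ∈ edgeCandidates n r | #(e ∩ A) = j} ≤
      meetingBound r d a j * n / 10 := by
  have hcount : (#{e ∈ edgeCandidates n r | #(e ∩ A) = j} : ℝ) ≤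
      (a * n) ^ j / j.factorial * (n ^ (r - j) / (r - j).factorial) := by
    calc (#{e ∈ edgeCandidates n r | #(e ∩ A) = j} : ℝ)
        ≤ (#A).choose j * n.choose (r - j) := by
          exact_mod_cast card_filter_card_inter_eq_le hj A
      _ ≤ (#A : ℝ) ^ j / j.factorial * (n ^ (r - j) / (r - j).factorial) := by
          gcongr <;> exact Nat.choose_le_pow_div _ _
      _ ≤ (a * n) ^ j / j.factorial * (n ^ (r - j) / (r - j).factorial) := by gcongr
  have hpow : (n : ℝ) ^ j * n ^ (r - j) = n ^ (r - 1) * n := by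
    rw [← pow_add, Nat.add_sub_cancel' hj, pow_sub_one_mul hr]
  have hfactorial : (r.choose j : ℝ) * j.factorial * (r - j).factorial =
      r * (r - 1).factorial := by
    exact_mod_cast (Nat.choose_mul_factorial_mul_factorial hj).trans
      (Nat.mul_factorial_pred hr).symm
  have hchoose : (r.choose j : ℝ) ≠ 0 := Nat.cast_ne_zero.2 (Nat.choose_pos hj).ne'
  calc edgeProb r d n * #{e ∈ edgeCandidates n r | #(e ∩ A) = j}
      ≤ edgeProb r d n * ((a * n) ^ j / j.factorial * (n ^ (r - j) / (r - j).factorial)) :=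
        mul_le_mul_of_nonneg_left hcount (edgeProb_nonneg hd r n)
    _ = d * (r - 1).factorial / n ^ (r - 1) *
          (r.choose j * a ^ j * (n ^ j * n ^ (r - j)) /
            (r.choose j * j.factorial * (r - j).factorial)) := by
        rw [edgeProb, mul_pow]
        field_simp
    _ = meetingBound r d a j / 10 * (n ^ (r - 1) / n ^ (r - 1) * n) := by
        rw [hpow, hfactorial, meetingBound]
        field_simp
    _ ≤ meetingBound r d a j / 10 * (1 * n) := by
        unfold meetingBound
        gcongr
        exact div_self_le_one _
    _ = meetingBound r d a j * n / 10 := by ring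

lemma ten_le_meetingBound (hr : r ≠ 0) (hd : 0 ≤ d) (ha : a ∈ Set.Icc (0 : ℝ) 1)
    (had : r ≤ d * a ^ (r - 1)) (hj : j ≤ r - 1) : 10 ≤ meetingBound r d a j := by
  have hchoose : (1 : ℝ) ≤ r.choose j := by exact_mod_cast Nat.choose_pos (by lia : j ≤ r)
  have hmono : d * a ^ (r - 1) ≤ d * a ^ j :=
    mul_le_mul_of_nonneg_left (pow_le_pow_of_le_one ha.1 ha.2 hj) hd
  calc (10 : ℝ) = 10 * r / r := by field_simp
    _ ≤ 10 * (d * a ^ j * r.choose j) / r := by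
        gcongr
        exact (had.trans hmono).trans
          (le_mul_of_one_le_right (mul_nonneg hd (pow_nonneg ha.1 j)) hchoose)
    _ = meetingBound r d a j := by
        rw [meetingBound]
        ring

lemma subsetProb_meetingBound_le (hr : r ≠ 0) (hd : 0 ≤ d) (ha : a ∈ Set.Icc (0 : ℝ) 1)
    (had : r ≤ d * a ^ (r - 1)) (hp : edgeProb r d n ∈ Set.Icc (0 : ℝ) 1) (hj : j ≤ r - 1)
    {A : Finset (Fin n)} (hA : #A ≤ a * n) :
    subsetProb (edgeProb r d n) (edgeCandidates n r)
      (fun E ↦ meetingBound r d a j * n ≤ #{e ∈ E | #(e ∩ A) = j}) ≤ exp (-(5 * n)) := by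
  set B := {e ∈ edgeCandidates n r | #(e ∩ A) = j}
  have hinter : ∀ E ⊆ edgeCandidates n r, {e ∈ E | #(e ∩ A) = j} = E ∩ B := fun E hE ↦ by
    rw [inter_filter, inter_eq_left.2 hE]
  have hmean : edgeProb r d n * #B ≤ meetingBound r d a j * n / 10 :=
    edgeProb_mul_card_filter_card_inter_eq_le hr hd ha.1 (hj.trans (Nat.sub_le r 1)) hA
  have hbound := mul_le_mul_of_nonneg_right (ten_le_meetingBound hr hd ha had hj)
    (Nat.cast_nonneg (α := ℝ) n)
  calc subsetProb (edgeProb r d n) (edgeCandidates n r)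
        (fun E ↦ meetingBound r d a j * n ≤ #{e ∈ E | #(e ∩ A) = j})
      ≤ subsetProb (edgeProb r d n) (edgeCandidates n r)
          (fun E ↦ meetingBound r d a j * n ≤ #(E ∩ B)) :=
        subsetProb_mono hp fun E hE h ↦ by rwa [← hinter E hE]
    _ ≤ exp (-(1 * (meetingBound r d a j * n)) + edgeProb r d n * exp 1 * #B) :=
        subsetProb_le_card_inter_le hp (filter_subset _ _) zero_le_one _
    _ ≤ exp (-(5 * n)) := by
        have hexp : edgeProb r d n * #B * exp 1 ≤ edgeProb r d n * #B * 3 :=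
          mul_le_mul_of_nonneg_left (by linarith [exp_one_lt_d9])
            (mul_nonneg hp.1 (Nat.cast_nonneg _))
        refine exp_le_exp.2 ?_
        linarith

lemma subsetProb_not_hasFewMeetingEdges_le (hr : r ≠ 0) (hd : 0 ≤ d)
    (ha : a ∈ Set.Icc (0 : ℝ) 1) (had : r ≤ d * a ^ (r - 1))
    (hp : edgeProb r d n ∈ Set.Icc (0 : ℝ) 1) :
    subsetProb (edgeProb r d n) (edgeCandidates n r)
      (fun E ↦ ¬HasFewMeetingEdges r d a (a * n) E) ≤ r * exp (-n) := by
  set S : Finset (Finset (Fin n)) := {A | (#A : ℝ) ≤ a * n}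
  set T := Icc 1 (r - 1) ×ˢ S
  have hT : (#T : ℝ) ≤ r * 2 ^ n := by
    have hS : #S ≤ 2 ^ n := (card_le_univ S).trans (by simp)
    have hj : #(Icc 1 (r - 1)) ≤ r := by simp
    exact_mod_cast (card_product _ _).trans_le (Nat.mul_le_mul hj hS)
  have htwo : (2 : ℝ) ^ n ≤ exp n := by
    rw [← exp_one_pow]
    gcongr
    linarith [exp_one_gt_d9]
  calc subsetProb (edgeProb r d n) (edgeCandidates n r)
        (fun E ↦ ¬HasFewMeetingEdges r d a (a * n) E)
      ≤ ∑ t ∈ T, subsetProb (edgeProb r d n) (edgeCandidates n r)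
          (fun E ↦ meetingBound r d a t.1 * n ≤ #{e ∈ E | #(e ∩ t.2) = t.1}) := by
        refine (subsetProb_mono hp fun E _ hE ↦ ?_).trans (subsetProb_exists_le hp T _)
        simp only [HasFewMeetingEdges] at hE
        push Not at hE
        obtain ⟨A, hA, j, hj₁, hjr, h⟩ := hE
        exact ⟨(j, A), mem_product.2 ⟨mem_Icc.2 ⟨hj₁, hjr⟩, mem_filter.2 ⟨mem_univ A, hA⟩⟩, h⟩
    _ ≤ ∑ _t ∈ T, exp (-(5 * n)) := sum_le_sum fun t ht ↦ by
        obtain ⟨hj, hA⟩ := mem_product.1 ht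
        exact subsetProb_meetingBound_le hr hd ha had hp (mem_Icc.1 hj).2 (mem_filter.1 hA).2
    _ ≤ r * exp n * exp (-(5 * n)) := by
        rw [sum_const, nsmul_eq_mul]
        gcongr
        exact hT.trans (by gcongr)
    _ ≤ r * exp (-n) := by
        rw [mul_assoc, ← exp_add]
        gcongr
        linarith [Nat.cast_nonneg (α := ℝ) n]

end Meeting

/-! ### Failure probability for given parameters -/

section Assembly

variable {n r k c q : ℕ} {a d M ρ δ kmax : ℝ}

lemma binomProb_eq_subsetProb (n r : ℕ) (p : ℝ) (P : Finset (Finset (Fin n)) → Prop) :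
    binomProb n r p P = subsetProb p (edgeCandidates n r) P := by
  simp only [binomProb, subsetProb, subsetExpect, subsetWeight, mul_ite, mul_one, mul_zero]

lemma hasGoodColoring_of_deletion (hr : 2 ≤ r) (hc : c ≠ 0) (hq : q ≠ 0)
    {E : Finset (Finset (Fin n))} (hE : E ⊆ edgeCandidates n r)
    (hsparse : IsLocallySparse c (δ * n) E) (hfew : HasFewMeetingEdges r d a (a * n) E)
    {W : Finset (Fin n)} (hW : #W ≤ δ * n) {σ : Fin n → Fin k} (hσM : σ ∈ balancedColorings n k M)
    (hσ : ProperColoring {e ∈ E | Disjoint e W} σ) (hδ : δ ≤ q * (a / 2)) (hMk : M / k ≤ a)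
    (han : 2 ≤ a * n) (hkmax : (k + r * c * q : ℕ) ≤ kmax) :
    HasGoodColoring r kmax (meetingBound r d a) E := by
  have hfloor : a * n / 2 ≤ (⌊a * n⌋₊ : ℝ) := by linarith [Nat.lt_floor_add_one (a * n)]
  have hWq : #W ≤ q * ⌊a * n⌋₊ := by
    have hWq' : (#W : ℝ) ≤ q * ⌊a * n⌋₊ := by
      calc (#W : ℝ) ≤ q * (a / 2) * n := hW.trans (by gcongr)
        _ = q * (a * n / 2) := by ring
        _ ≤ q * ⌊a * n⌋₊ := by gcongr
    exact_mod_cast hWq'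
  have hσ_floor (i : Fin k) : fiberCard σ i ≤ ⌊a * n⌋₊ := by
    refine Nat.le_floor ((mem_balancedColorings.1 hσM i).trans ?_)
    rw [mul_div_right_comm]
    gcongr
  obtain ⟨f, hf, hfM⟩ := exists_balanced_properColoring hr hc hq
    (fun e he ↦ mem_edgeCandidates.1 (hE he)) hsparse hW hWq hσ hσ_floor
  refine ⟨k + r * c * q, hkmax, f, hf, fun i j hj₁ hjr ↦ ?_⟩
  have hclass : (#{v | f v = i} : ℝ) ≤ a * n :=
    (Nat.le_floor_iff (by linarith)).1 (by simpa only [fiberCard] using hfM i)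
  simpa only [inter_filter, inter_univ] using (hfew _ hclass j hj₁ hjr).le

lemma subsetProb_not_hasGoodColoring_le (hr : 3 ≤ r) (hd : 0 < d) (hρ : 0 ≤ ρ) (hδ : 0 < δ)
    (hρδ : 2 * √(2 * ρ) ≤ δ) (hc : (2 : ℝ) ≤ c) (hcδ : 2 + log δ⁻¹ ≤ c)
    (hcd : exp 2 * d * δ ^ (r - 1) ≤ c * r) (hq : q ≠ 0) (hδq : δ ≤ q * (a / 2))
    (ha : a ∈ Set.Icc (0 : ℝ) 1) (had : r ≤ d * a ^ (r - 1)) (hMk : M / k ≤ a)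
    (han : 2 ≤ a * n) (hkmax : (k + r * c * q : ℕ) ≤ kmax)
    (hp : edgeProb r d n ∈ Set.Icc (0 : ℝ) 1)
    (hbalanced : exp (-(n * ρ)) ≤ subsetProb (edgeProb r d n) (edgeCandidates n r)
      fun E ↦ ∃ σ ∈ balancedColorings n k M, ProperColoring E σ) :
    subsetProb (edgeProb r d n) (edgeCandidates n r)
      (fun E ↦ ¬HasGoodColoring r kmax (meetingBound r d a) E) ≤
      exp (-(n * ρ)) + (n * (6 / (δ * n) ^ 3) + r * exp (-n)) := by
  have hn : n ≠ 0 := by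
    rintro rfl
    norm_num at han
  have hc₀ : c ≠ 0 := by
    rintro rfl
    norm_num at hc
  have hdeletion := subsetProb_not_exists_deletion_le hn hp hρ
    (fun e he ↦ card_pos.1 (by rw [mem_edgeCandidates.1 he]; lia)) hbalanced
  have hsparse := subsetProb_not_isLocallySparse_le hr hd hδ hc hcδ hcd hp
  have hfew := subsetProb_not_hasFewMeetingEdges_le (n := n) (by lia) hd.le ha had hp
  refine (subsetProb_mono hp fun E hE hbad ↦ ?_).trans <| (subsetProb_or_le hp _ _).trans <|
    add_le_add hdeletion <| (subsetProb_or_le hp _ _).trans <| add_le_add hsparse hfew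
  by_contra! hgood
  obtain ⟨⟨W, hW, σ, hσM, hσ⟩, hE_sparse, hE_few⟩ := hgood
  exact hbad <| hasGoodColoring_of_deletion (by lia) hc₀ hq hE hE_sparse hE_few
    (hW.trans (by gcongr)) hσM hσ hδq hMk han hkmax

lemma tendsto_natCast_mul_exp_neg {γ : ℝ} (hγ : 0 < γ) :
    Tendsto (fun n : ℕ ↦ (n : ℝ) * exp (-(n * γ))) atTop (nhds 0) := by
  have hlim := ((tendsto_pow_mul_exp_neg_atTop_nhds_zero 1).comp
    (tendsto_natCast_atTop_atTop.atTop_mul_const hγ)).const_mul γ⁻¹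
  rw [mul_zero] at hlim
  refine hlim.congr fun n ↦ ?_
  simp only [Function.comp_apply, pow_one]
  field_simp

lemma tendsto_natCast_mul_subsetProb_not_hasGoodColoring (hr : 3 ≤ r) (hd : 0 < d) (hρ : 0 < ρ)
    (hδ : 0 < δ) (hρδ : 2 * √(2 * ρ) ≤ δ) (hc : (2 : ℝ) ≤ c) (hcδ : 2 + log δ⁻¹ ≤ c)
    (hcd : exp 2 * d * δ ^ (r - 1) ≤ c * r) (hq : q ≠ 0) (hδq : δ ≤ q * (a / 2))
    (ha : a ∈ Set.Ioc (0 : ℝ) 1) (had : r ≤ d * a ^ (r - 1)) (hMk : M / k ≤ a)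
    (hkmax : (k + r * c * q : ℕ) ≤ kmax)
    (hbalanced : ∀ᶠ n : ℕ in atTop, exp (-(n * ρ)) ≤
      subsetProb (edgeProb r d n) (edgeCandidates n r)
        fun E ↦ ∃ σ ∈ balancedColorings n k M, ProperColoring E σ) :
    Tendsto (fun n : ℕ ↦ n * subsetProb (edgeProb r d n) (edgeCandidates n r)
      fun E ↦ ¬HasGoodColoring r kmax (meetingBound r d a) E) atTop (nhds 0) := by
  have hp : ∀ᶠ n : ℕ in atTop, edgeProb r d n ∈ Set.Icc (0 : ℝ) 1 :=
    ((tendsto_edgeProb (by lia) d).eventually_le_const one_pos).mono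
      fun n hn ↦ ⟨edgeProb_nonneg hd.le r n, hn⟩
  have han : ∀ᶠ n : ℕ in atTop, 2 ≤ a * n :=
    (tendsto_natCast_atTop_atTop.const_mul_atTop ha.1).eventually_ge_atTop 2
  have hlim : Tendsto (fun n : ℕ ↦ n * exp (-(n * ρ)) +
      (6 / δ ^ 3 * (n : ℝ)⁻¹ + r * (n * exp (-(n * 1))))) atTop (nhds 0) := by
    simpa using (tendsto_natCast_mul_exp_neg hρ).add
      ((tendsto_inv_atTop_nhds_zero_nat.const_mul (6 / δ ^ 3)).add
        ((tendsto_natCast_mul_exp_neg one_pos).const_mul (r : ℝ)))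
  refine tendsto_of_tendsto_of_tendsto_of_le_of_le' tendsto_const_nhds hlim ?_ ?_
  · filter_upwards [hp] with n hp
    exact mul_nonneg n.cast_nonneg (subsetProb_nonneg hp _)
  · filter_upwards [hp, han, hbalanced, eventually_ne_atTop 0] with n hp han hbalanced hn
    refine (mul_le_mul_of_nonneg_left (subsetProb_not_hasGoodColoring_le hr hd hρ.le hδ hρδ hc hcδ
      hcd hq hδq (Set.Ioc_subset_Icc_self ha) had hMk han hkmax hp hbalanced)
      n.cast_nonneg).trans_eq ?_
    field_simp

end Assembly

section LogScale

variable {r k : ℕ} {a d M kmax : ℝ}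

lemma two_mul_sqrt_le_log_div {x : ℝ} (hx : 0 < x) (hlog : 16 * exp 6 ≤ log x) :
    2 * √(2 * (2 * (log x * exp 6 / x ^ 2))) ≤ log x / x := by
  have hlog₀ : 0 < log x := by linarith [exp_pos 6]
  rw [← le_div_iff₀' two_pos, sqrt_le_left (by positivity)]
  calc 2 * (2 * (log x * exp 6 / x ^ 2)) = log x * (16 * exp 6) / (4 * x ^ 2) := by ring
    _ ≤ log x * log x / (4 * x ^ 2) := by gcongr
    _ = (log x / x / 2) ^ 2 := by ring

lemma exp_two_mul_mul_pow_le (hr : r ≠ 0) (hd : 0 ≤ d) {x : ℝ} (hx : 0 < x) (hlog : 0 ≤ log x)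
    (hM : 1 ≤ M) (hdM : M ^ r * (d / r) ≤ (log x - 2) * x ^ (r - 1)) :
    exp 2 * d * (log x / x) ^ (r - 1) ≤ 8 * log x ^ r * r := by
  have he : exp 2 ≤ 8 := by
    have hsq : exp 2 = exp 1 ^ 2 := by rw [← exp_nat_mul]; norm_num
    rw [hsq]
    nlinarith [exp_one_lt_d9, exp_pos 1]
  have hdx : d / r ≤ log x * x ^ (r - 1) := by
    calc d / r ≤ M ^ r * (d / r) := le_mul_of_one_le_left (by positivity) (one_le_pow₀ hM)
      _ ≤ (log x - 2) * x ^ (r - 1) := hdM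
      _ ≤ log x * x ^ (r - 1) := by gcongr; linarith
  calc exp 2 * d * (log x / x) ^ (r - 1)
      = exp 2 * (d / r) * (log x / x) ^ (r - 1) * r := by field_simp
    _ ≤ 8 * (log x * x ^ (r - 1)) * (log x / x) ^ (r - 1) * r := by gcongr
    _ = 8 * log x ^ r * r := by
        rw [← pow_sub_one_mul hr (log x), div_pow]
        field_simp

-- The deletion rate `2 √(2ρ)` is at most `log k / k`, and a polylogarithmic sparsity constant and
-- number of additional colors suffice for sets of that density.
lemma tendsto_natCast_mul_subsetProb_not_hasGoodColoring_of_log (hr : 3 ≤ r) (hd : 0 < d)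
    (hlog : 16 * exp 6 ≤ log k) (hM : 1 < M)
    (hdM : M ^ r * (d / r) ≤ (log k - 2) * (k : ℝ) ^ (r - 1))
    (ha : a ≤ 1) (had : r ≤ d * a ^ (r - 1)) (hMk : M / k ≤ a)
    (hkmax : (k + r * ⌈8 * log k ^ r⌉₊ * ⌈2 * log k⌉₊ : ℕ) ≤ kmax) :
    Tendsto (fun n : ℕ ↦ n * subsetProb (edgeProb r d n) (edgeCandidates n r)
      fun E ↦ ¬HasGoodColoring r kmax (meetingBound r d a) E) atTop (nhds 0) := by
  have hlog₁₆ : 16 ≤ log k := by linarith [one_le_exp (show (0 : ℝ) ≤ 6 by norm_num)]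
  have hk : (0 : ℝ) < k := by
    refine k.cast_nonneg.lt_of_ne' fun hk ↦ ?_
    rw [hk, log_zero] at hlog₁₆
    linarith
  have hak : (k : ℝ)⁻¹ ≤ a := by
    rw [← one_div]
    exact (div_le_div_of_nonneg_right hM.le hk.le).trans hMk
  have hc : 8 * log k ^ r ≤ ⌈8 * log k ^ r⌉₊ := Nat.le_ceil _
  have hc_log : 8 * log k ≤ ⌈8 * log k ^ r⌉₊ := by
    linarith [le_self_pow₀ (by linarith : 1 ≤ log (k : ℝ)) (by lia : r ≠ 0)]
  refine tendsto_natCast_mul_subsetProb_not_hasGoodColoring hr hd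
    (ρ := 2 * (log k * exp 6 / (k : ℝ) ^ 2)) (δ := log k / k) (by positivity) (by positivity)
    (two_mul_sqrt_le_log_div hk hlog) (by linarith) ?_ ?_ (Nat.ceil_pos.2 (by linarith)).ne' ?_
    ⟨(inv_pos.2 hk).trans_le hak, ha⟩ had hMk hkmax
    (eventually_exp_le_subsetProb_balanced hr (by linarith) hd.le hM hdM)
  · rw [inv_div, log_div hk.ne' (by linarith)]
    linarith [log_nonneg (by linarith : 1 ≤ log (k : ℝ))]
  · exact (exp_two_mul_mul_pow_le (by lia) hd.le hk (by linarith) hM.le hdM).trans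
      (mul_le_mul_of_nonneg_right hc r.cast_nonneg)
  · calc log k / k = 2 * log k * ((k : ℝ)⁻¹ / 2) := by ring
      _ ≤ ⌈2 * log k⌉₊ * (a / 2) := by
          gcongr
          exact Nat.le_ceil _

end LogScale

/-! ### Choice of the parameters for large `d` -/

section LeadColors

variable {r : ℕ} {d : ℝ}

/-- The leading order `((r - 1) d / (r log d)) ^ (1 / (r - 1))` of the chromatic number. -/
noncomputable def leadColors (r : ℕ) (d : ℝ) : ℝ :=
  (((r : ℝ) - 1) * d / (r * log d)) ^ ((1 : ℝ) / ((r : ℝ) - 1))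

lemma leadColors_base_nonneg (hr : 1 ≤ r) (hd : 1 ≤ d) :
    0 ≤ ((r : ℝ) - 1) * d / (r * log d) := by
  have hr' : (0 : ℝ) ≤ r - 1 := sub_nonneg.2 (Nat.one_le_cast.2 hr)
  have := log_nonneg hd
  positivity

lemma leadColors_inv (hr : 1 ≤ r) (hd : 1 ≤ d) :
    (leadColors r d)⁻¹ = (r * log d / (((r : ℝ) - 1) * d)) ^ ((1 : ℝ) / ((r : ℝ) - 1)) := by
  rw [leadColors, ← inv_rpow (leadColors_base_nonneg hr hd), inv_div]

lemma leadColors_pow (hr : 2 ≤ r) (hd : 1 ≤ d) :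
    leadColors r d ^ (r - 1) = ((r : ℝ) - 1) * d / (r * log d) := by
  have hcast : ((r - 1 : ℕ) : ℝ) = r - 1 := Nat.cast_pred (by lia)
  have hbase := leadColors_base_nonneg (by lia : 1 ≤ r) hd
  rw [leadColors, one_div]
  rw [← hcast] at hbase ⊢
  exact rpow_inv_natCast_pow hbase (by lia)

lemma log_leadColors (hr : 2 ≤ r) (hd : 1 < d) :
    (r - 1) * log (leadColors r d) = log ((r - 1) / r) + log d - log (log d) := by
  have hr' : (0 : ℝ) < r - 1 := sub_pos.2 (Nat.one_lt_cast.2 hr)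
  have hlog := log_pos hd
  rw [leadColors, log_rpow (by positivity), ← mul_assoc, mul_one_div_cancel hr'.ne', one_mul,
    ← div_mul_div_comm, log_mul (by positivity) (by positivity), log_div _ hlog.ne']
  · ring
  · positivity

lemma tendsto_leadColors (hr : 2 ≤ r) : Tendsto (leadColors r) atTop atTop := by
  have hr' : (0 : ℝ) < r - 1 := sub_pos.2 (Nat.one_lt_cast.2 hr)
  have hratio : 0 < ((r : ℝ) - 1) / r := div_pos hr' (by linarith)
  have hdiv : Tendsto (fun d : ℝ ↦ log d / d) atTop (nhdsWithin 0 (Set.Ioi 0)) := by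
    refine tendsto_nhdsWithin_iff.2 ⟨isLittleO_log_id_atTop.tendsto_div_nhds_zero, ?_⟩
    filter_upwards [eventually_gt_atTop 1] with d hd
    exact div_pos (log_pos hd) (by linarith)
  refine ((tendsto_rpow_atTop (one_div_pos.2 hr')).comp
    (hdiv.inv_tendsto_nhdsGT_zero.const_mul_atTop hratio)).congr fun d ↦ ?_
  simp only [Function.comp_apply, Pi.inv_apply, inv_div, leadColors, div_mul_div_comm]

lemma eventually_add_mul_log_pow_le (A K : ℝ) (m : ℕ) {δ ε : ℝ} (hδ : 0 < δ) (hε : 0 < ε) :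
    ∀ᶠ x : ℝ in atTop, A + K * log (δ * x) ^ m ≤ ε * x := by
  have hlog : (fun x : ℝ ↦ log (δ * x) ^ m) =o[atTop] (id : ℝ → ℝ) :=
    (isLittleO_pow_log_id_atTop.comp_tendsto (tendsto_id.const_mul_atTop hδ)).trans_isBigO
      (Asymptotics.isBigO_const_mul_self δ id atTop)
  have hsum : (fun x : ℝ ↦ A + K * log (δ * x) ^ m) =o[atTop] (id : ℝ → ℝ) :=
    (Asymptotics.isLittleO_const_id_atTop A).add (hlog.const_mul_left K)
  filter_upwards [hsum.def hε, eventually_ge_atTop 0] with x hx hx₀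
  rw [norm_eq_abs, id, norm_of_nonneg hx₀] at hx
  exact (le_abs_self _).trans hx

lemma eventually_log_le_mul_log_leadColors (hr : 2 ≤ r) {η : ℝ} (hη : 0 < η) :
    ∀ᶠ d in atTop, log d ≤ (1 + η) * ((r - 1) * (log (leadColors r d) - 2)) := by
  filter_upwards [eventually_gt_atTop 1, tendsto_log_atTop.eventually
    (eventually_add_mul_log_pow_le ((1 + η) * (2 * (r - 1) - log ((r - 1) / r))) (1 + η) 1
      one_pos hη)] with d hd hloglog
  rw [one_mul, pow_one] at hloglog
  rw [mul_sub, log_leadColors hr hd]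
  linarith

lemma eventually_le_mul_inv_leadColors_pow (hr : 2 ≤ r) {b : ℝ} (hb : 1 ≤ b) :
    ∀ᶠ d in atTop, r ≤ d * (b * (leadColors r d)⁻¹) ^ (r - 1) := by
  have hr' : (0 : ℝ) < r - 1 := sub_pos.2 (Nat.one_lt_cast.2 hr)
  filter_upwards [eventually_gt_atTop 1, tendsto_log_atTop.eventually_ge_atTop ((r : ℝ) - 1)]
    with d hd hlog
  calc (r : ℝ) ≤ r * (log d / (r - 1)) :=
        le_mul_of_one_le_right r.cast_nonneg ((one_le_div hr').2 hlog)
    _ = d * (1 * (leadColors r d)⁻¹ ^ (r - 1)) := by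
        rw [inv_pow, leadColors_pow hr hd.le]
        field_simp
    _ ≤ d * (b * (leadColors r d)⁻¹) ^ (r - 1) := by
        have hinv : 0 ≤ (leadColors r d)⁻¹ :=
          inv_nonneg.2 (rpow_nonneg (leadColors_base_nonneg (by lia) hd.le) _)
        rw [mul_pow]
        gcongr
        exact one_le_pow₀ hb

end LeadColors

section BaseColors

variable {r : ℕ} {η : ℝ}

/-- The number `⌈(1 + η) leadColors r d⌉` of colors that are used before the deleted vertices are
recolored. -/
noncomputable def baseColors (r : ℕ) (η d : ℝ) : ℕ :=
  ⌈(1 + η) * leadColors r d⌉₊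

lemma leadColors_le_baseColors (hη : 0 ≤ η) {d : ℝ} (hκ : 0 ≤ leadColors r d) :
    leadColors r d ≤ baseColors r η d :=
  (le_mul_of_one_le_left hκ (by linarith)).trans (Nat.le_ceil _)

lemma tendsto_log_baseColors (hr : 2 ≤ r) (hη : 0 ≤ η) :
    Tendsto (fun d ↦ log (baseColors r η d)) atTop atTop := by
  refine tendsto_log_atTop.comp (tendsto_atTop_mono' _ ?_ (tendsto_leadColors hr))
  filter_upwards [(tendsto_leadColors hr).eventually_ge_atTop 0] with d hκ
  exact leadColors_le_baseColors hη hκ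

lemma eventually_mul_div_le_log_baseColors (hr : 3 ≤ r) (hη : 0 < η) :
    ∀ᶠ d in atTop, (1 + η) * (d / r) ≤
      (log (baseColors r η d) - 2) * (baseColors r η d : ℝ) ^ (r - 1) := by
  have hr₂ : 2 ≤ r := by lia
  have hr' : (0 : ℝ) < r - 1 := sub_pos.2 (Nat.one_lt_cast.2 hr₂)
  filter_upwards [eventually_gt_atTop 1, (tendsto_leadColors hr₂).eventually_gt_atTop 0,
    eventually_log_le_mul_log_leadColors hr₂ hη] with d hd hκ hlog
  have hκk : leadColors r d ≤ baseColors r η d := leadColors_le_baseColors hη.le hκ.le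
  set κ := leadColors r d
  set k := baseColors r η d
  have hlogk : log d / (r - 1) ≤ (1 + η) * (log k - 2) := by
    have hmono : log κ - 2 ≤ log k - 2 := sub_le_sub_right (log_le_log hκ hκk) 2
    rw [div_le_iff₀' hr', mul_left_comm]
    exact hlog.trans (by gcongr)
  have hlogk₀ : 0 ≤ log k - 2 := by
    have : 0 ≤ log d / (r - 1) := div_nonneg (log_nonneg hd.le) hr'.le
    exact nonneg_of_mul_nonneg_right (this.trans hlogk) (by linarith)
  calc (1 + η) * (d / r) = (1 + η) * (log d / (r - 1) * κ ^ (r - 1)) := by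
        rw [leadColors_pow hr₂ hd.le]
        have := (log_pos hd).ne'
        field_simp
    _ ≤ (1 + η) * ((1 + η) * (log k - 2) * κ ^ (r - 1)) := by gcongr
    _ = (log k - 2) * ((1 + η) ^ 2 * κ ^ (r - 1)) := by ring
    _ ≤ (log k - 2) * ((1 + η) ^ (r - 1) * κ ^ (r - 1)) := by
        gcongr
        · linarith
        · lia
    _ ≤ (log k - 2) * (k : ℝ) ^ (r - 1) := by
        rw [← mul_pow]
        gcongr
        exact Nat.le_ceil _

lemma eventually_baseColors_add_le (hr : 2 ≤ r) (hη : 0 ≤ η) {ε : ℝ} (hηε : η < ε) :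
    ∀ᶠ d in atTop, ((baseColors r η d + r * ⌈8 * log (baseColors r η d) ^ r⌉₊ *
      ⌈2 * log (baseColors r η d)⌉₊ : ℕ) : ℝ) ≤ (1 + ε) * leadColors r d := by
  filter_upwards [(tendsto_leadColors hr).eventually_ge_atTop 1,
    (tendsto_log_baseColors hr hη).eventually_ge_atTop 1,
    (tendsto_leadColors hr).eventually (eventually_add_mul_log_pow_le 1 (27 * r) (r + 1)
      (by linarith : 0 < 2 + η) (sub_pos.2 hηε))] with d hκ hL hextra
  have hκk : leadColors r d ≤ baseColors r η d := leadColors_le_baseColors hη (by linarith)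
  set κ := leadColors r d
  set k := baseColors r η d
  set L := log (k : ℝ)
  have hk : (k : ℝ) ≤ (1 + η) * κ + 1 := (Nat.ceil_lt_add_one (by positivity)).le
  have hk₀ : (0 : ℝ) < k := by linarith
  have hLκ : L ≤ log ((2 + η) * κ) := log_le_log hk₀ (by linarith)
  have hc : (⌈8 * L ^ r⌉₊ : ℝ) ≤ 9 * L ^ r := by
    linarith [Nat.ceil_lt_add_one (by positivity : 0 ≤ 8 * L ^ r), one_le_pow₀ hL (n := r)]
  have hq : (⌈2 * L⌉₊ : ℝ) ≤ 3 * L := by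
    linarith [Nat.ceil_lt_add_one (by positivity : 0 ≤ 2 * L)]
  push_cast
  calc (k : ℝ) + r * ⌈8 * L ^ r⌉₊ * ⌈2 * L⌉₊ ≤ k + r * (9 * L ^ r) * (3 * L) := by gcongr
    _ = k + 27 * r * L ^ (r + 1) := by ring
    _ ≤ k + 27 * r * log ((2 + η) * κ) ^ (r + 1) := by gcongr
    _ ≤ (1 + ε) * κ := by linarith

end BaseColors

/-- With probability `1 − o(1/n)`, the binomial random hypergraph `H_r(n,p)` with
`p = d(r−1)!/n^(r−1)` admits a proper coloring using at most
`(1+ε/2)·((r−1)d/(r log d))^(1/(r−1))` colors in which every color class `A` meets at most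
`κ_j·n` hyperedges in exactly `j` vertices, for every `1 ≤ j ≤ r−1`, where
`κ_j = (10d/r)·C(r,j)·a^j` and `a = (1+ε/2)·(r log d/((r−1)d))^(1/(r−1))`. -/
theorem binomial_hypergraph_good_coloring (r : ℕ) (hr : 3 ≤ r) (ε : ℝ) (hε : 0 < ε) :
    ∃ d₀ : ℝ, ∀ d : ℝ, d₀ ≤ d →
      Filter.Tendsto
        (fun n : ℕ =>
          (n : ℝ) *
            binomProb n r (d * ((r - 1).factorial : ℝ) / (n : ℝ) ^ (r - 1))
              (fun E =>
                ¬ HasGoodColoring r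
                    ((1 + ε / 2) *
                      ((((r : ℝ) - 1) * d / (r * Real.log d)) ^ ((1 : ℝ) / ((r : ℝ) - 1))))
                    (fun j => (10 * d / r) * (r.choose j : ℝ) *
                      ((1 + ε / 2) *
                          ((r * Real.log d / (((r : ℝ) - 1) * d)) ^
                            ((1 : ℝ) / ((r : ℝ) - 1)))) ^ j)
                    E))
        Filter.atTop (nhds 0) := by
  have hr₂ : 2 ≤ r := by lia
  have hM : 1 < (1 + ε / 4) ^ (r : ℝ)⁻¹ := one_lt_rpow (by linarith) (by positivity)
  have hMr : ((1 + ε / 4) ^ (r : ℝ)⁻¹) ^ r = 1 + ε / 4 :=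
    rpow_inv_natCast_pow (by linarith) (by lia)
  refine eventually_atTop.1 ?_
  filter_upwards [eventually_gt_atTop 1,
    (tendsto_leadColors hr₂).eventually_ge_atTop (1 + ε / 2),
    (tendsto_log_baseColors hr₂ (by positivity : 0 ≤ ε / 4)).eventually_ge_atTop (16 * exp 6),
    eventually_mul_div_le_log_baseColors hr (by positivity : 0 < ε / 4),
    eventually_le_mul_inv_leadColors_pow hr₂ (by linarith : 1 ≤ 1 + ε / 2),
    eventually_baseColors_add_le hr₂ (by positivity) (by linarith : ε / 4 < ε / 2)]
    with d hd hκ hlog henergy had hcolors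
  have hκ₀ : 0 < leadColors r d := by linarith
  simp only [binomProb_eq_subsetProb, ← leadColors_inv (by lia : 1 ≤ r) hd.le]
  refine tendsto_natCast_mul_subsetProb_not_hasGoodColoring_of_log hr (by linarith) hlog hM
    (by rwa [hMr]) ?_ had ?_ hcolors
  · rwa [← div_eq_mul_inv, div_le_one hκ₀]
  · rw [← div_eq_mul_inv]
    have hM_le : (1 + ε / 4) ^ (r : ℝ)⁻¹ ≤ 1 + ε / 2 :=
      (le_self_pow₀ hM.le (by lia : r ≠ 0)).trans (by linarith)
    gcongr
    exact leadColors_le_baseColors (by positivity) hκ₀.le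
end

section
/- Let r ≥ 2 be an integer, let H be an r-uniform hypergraph with vertex set V, let U ⊆ V, and let δ be a positive integer. Suppose that for every nonempty subset S ⊆ U, the number of hyperedges of H entirely contained in S is strictly less than δ·|S|/r. Then there is a map c: U → {1,…,δ} such that no hyperedge of H contained in U has all of its vertices assigned the same color by c. -/
/-!
Sparsity makes the induced hypergraph degenerate: in every nonempty `S ⊆ U` the degrees sum to the
total size of the hyperedges inside `S`, which is less than `δ|S|`, so some vertex of `S` lies in
fewer than `δ` of them. Delete such a vertex, color the rest by induction, and put it back: each of
the fewer than `δ` hyperedges at the vertex forbids at most one color, namely that of some other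
vertex of that hyperedge, so a color remains available.
-/

open Finset

section

variable {V C : Type*} {H : Finset (Finset V)} {U : Finset V} {v : V} {δ : ℕ}

/-- A coloring `c` is proper for the subhypergraph of `H` induced on `U`: no hyperedge contained in
`U` is monochromatic. A hyperedge with at most one vertex counts as monochromatic. -/
def IsProperOn (c : V → C) (H : Finset (Finset V)) (U : Finset V) : Prop :=
  ∀ e ∈ H, e ⊆ U → ∃ v ∈ e, ∃ w ∈ e, c v ≠ c w

theorem sum_card_lt_of_card_lt_div {E : Finset (Finset V)} {r n : ℕ} (hr : 0 < r)
    (hE : ∀ e ∈ E, #e ≤ r) (h : (#E : ℝ) < n / r) : ∑ e ∈ E, #e < n := by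
  rw [lt_div_iff₀ (by exact_mod_cast hr)] at h
  exact (sum_le_card_nsmul E card r hE).trans_lt (by exact_mod_cast h)

variable [DecidableEq V]

/-- The degree of `v` in the subhypergraph of `H` induced on `S`. -/
def inducedDegree (H : Finset (Finset V)) (S : Finset V) (v : V) : ℕ :=
  #{e ∈ {e ∈ H | e ⊆ S} | v ∈ e}

theorem exists_inducedDegree_lt {S : Finset V} (h : ∑ e ∈ H with e ⊆ S, #e < δ * #S) :
    ∃ v ∈ S, inducedDegree H S v < δ := by
  by_contra! hdeg
  have hinter : ∑ e ∈ H with e ⊆ S, #(S ∩ e) = ∑ e ∈ H with e ⊆ S, #e :=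
    sum_congr rfl fun e he => by rw [inter_eq_right.mpr (mem_filter.mp he).2]
  have hle : #S * δ ≤ ∑ e ∈ H with e ⊆ S, #(S ∩ e) := le_sum_card_inter hdeg
  rw [hinter, mul_comm] at hle
  exact hle.not_gt h

theorem exists_color_of_inducedDegree_lt (hH : ∀ e ∈ H, e.Nontrivial)
    (hv : inducedDegree H U v < δ) (c : V → Fin δ) :
    ∃ a, ∀ e ∈ H, e ⊆ U → v ∈ e → ∃ w ∈ e, w ≠ v ∧ c w ≠ a := by
  have : Nonempty V := ⟨v⟩
  choose! w hwe hwv using fun e he => (hH e he).exists_ne v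
  let forbidden : Finset (Fin δ) := {e ∈ {e ∈ H | e ⊆ U} | v ∈ e}.image fun e => c (w e)
  have hcard : #forbidden < #(univ : Finset (Fin δ)) := by
    rw [card_fin]
    exact card_image_le.trans_lt hv
  obtain ⟨a, -, ha⟩ := exists_mem_notMem_of_card_lt_card hcard
  refine ⟨a, fun e he heU hve => ⟨w e, hwe e he, hwv e he, fun hca => ha ?_⟩⟩
  exact mem_image.mpr ⟨e, by simp only [mem_filter, he, heU, hve, and_self], hca⟩

theorem IsProperOn.update {c : V → C} {a : C} (hc : IsProperOn c H (U.erase v))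
    (ha : ∀ e ∈ H, e ⊆ U → v ∈ e → ∃ w ∈ e, w ≠ v ∧ c w ≠ a) :
    IsProperOn (Function.update c v a) H U := by
  intro e he heU
  by_cases hve : v ∈ e
  · obtain ⟨w, hwe, hwv, hwa⟩ := ha e he heU hve
    refine ⟨w, hwe, v, hve, ?_⟩
    rwa [Function.update_self, Function.update_of_ne hwv]
  · obtain ⟨x, hx, y, hy, hxy⟩ := hc e he (subset_erase.mpr ⟨heU, hve⟩)
    refine ⟨x, hx, y, hy, ?_⟩
    rwa [Function.update_of_ne (ne_of_mem_of_not_mem hx hve),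
      Function.update_of_ne (ne_of_mem_of_not_mem hy hve)]

theorem exists_isProperOn_of_degenerate (hH : ∀ e ∈ H, e.Nontrivial) (hδ : 0 < δ)
    (hdeg : ∀ S ⊆ U, S.Nonempty → ∃ v ∈ S, inducedDegree H S v < δ) :
    ∃ c : V → Fin δ, IsProperOn c H U := by
  induction U using eraseInduction with
  | H U ih =>
    rcases U.eq_empty_or_nonempty with rfl | hU
    · exact ⟨fun _ => ⟨0, hδ⟩, fun e he hempty =>
        absurd (subset_empty.mp hempty) (hH e he).nonempty.ne_empty⟩
    · obtain ⟨v, hvU, hv⟩ := hdeg U subset_rfl hU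
      obtain ⟨c, hc⟩ := ih v hvU fun S hS => hdeg S (hS.trans (erase_subset v U))
      obtain ⟨a, ha⟩ := exists_color_of_inducedDegree_lt hH hv c
      exact ⟨Function.update c v a, hc.update ha⟩

theorem recolor_sparse_subset_general (hH : ∀ e ∈ H, e.Nontrivial) (hδ : 0 < δ)
    (hsparse : ∀ S ⊆ U, S.Nonempty → ∑ e ∈ H with e ⊆ S, #e < δ * #S) :
    ∃ c : V → Fin δ, IsProperOn c H U :=
  exists_isProperOn_of_degenerate hH hδ fun S hSU hS => exists_inducedDegree_lt (hsparse S hSU hS)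

end

/-- If `H` is an `r`-uniform hypergraph and `U` a set of vertices such that every nonempty
`S ⊆ U` contains strictly fewer than `δ|S|/r` hyperedges of `H`, then `U` can be colored
with `δ` colors so that no hyperedge of `H` contained in `U` is monochromatic. -/
theorem recolor_sparse_subset {V : Type*} [DecidableEq V] (r : ℕ) (hr : 2 ≤ r)
    (H : Finset (Finset V)) (hH : ∀ e ∈ H, e.card = r) (U : Finset V) (δ : ℕ) (hδ : 0 < δ)
    (hsparse : ∀ S : Finset V, S ⊆ U → S.Nonempty →
      ((H.filter (fun e => e ⊆ S)).card : ℝ) < δ * S.card / r) :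
    ∃ c : V → Fin δ, ∀ e ∈ H, e ⊆ U → ∃ v ∈ e, ∃ w ∈ e, c v ≠ c w := by
  have hnontrivial : ∀ e ∈ H, e.Nontrivial := fun e he =>
    one_lt_card_iff_nontrivial.mp (hr.trans_eq (hH e he).symm)
  exact recolor_sparse_subset_general hnontrivial hδ fun S hSU hS =>
    sum_card_lt_of_card_lt_div (by positivity) (fun e he => (hH e (mem_of_mem_filter e he)).le)
      (by exact_mod_cast hsparse S hSU hS)
end

section
/- For every integer r ≥ 3, every ε > 0 and every constant K > 0 there exists d₀ = d₀(r, ε, K) such that for every real d ≥ d₀ the following holds. Set δ := (ε/2)·((r−1)d/(r log d))^{1/(r−1)} and u = u(n) := ⌊K·n/d^{1/2}⌋. Then Σ_{s=1}^{u} [ (ne/s) · (dse/((dn−δs)·r))^{δ} · (e·r·r!/(δs))^{δ/r} ]^{s} → 0 as n → ∞. -/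
open Finset Real

/-!
For fixed `s` the bracket is `O(1/n)`: its middle factor is at most `(2 e s / n) ^ 2`, because
`δ ≥ 2` and `δ s ≤ d n / 2`, and its last factor is at most `1`, because `δ ≥ e r r!`. The resulting
bound `4 e³ s / n` is moreover at most `1/2` for all `s ≤ κ n` when `κ` is small, so the terms of
the sum are dominated by `(1/2) ^ s` and dominated convergence gives the limit. With `κ = K / √d`
the conditions hold for large `d` because `δ → ∞` while `δ = O(d)`.
-/

open Filter Topology Asymptotics

/-- The bracket that is raised to the power `s` in the sum, for real `n` and `s`. -/
noncomputable def repairBracket (r : ℕ) (d δ n s : ℝ) : ℝ :=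
  (n * exp 1 / s) * ((d * s * exp 1 / ((d * n - δ * s) * r)) ^ δ) *
    ((exp 1 * r * (r.factorial : ℝ) / (δ * s)) ^ (δ / r))

/-- The parameter `δ` of the statement as a function of `d`, for real `r`. -/
noncomputable def repairDelta (ε r d : ℝ) : ℝ :=
  ε / 2 * ((r - 1) * d / (r * log d)) ^ (1 / (r - 1))

lemma tendsto_sum_Icc_pow_nhds_zero {ι R : Type*} [NormedRing R] [CompleteSpace R] {l : Filter ι}
    {b : ι → ℕ → R} {u : ι → ℕ} {ρ : ℝ} (hρ0 : 0 ≤ ρ) (hρ1 : ρ < 1)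
    (hbound : ∀ᶠ i in l, ∀ s ∈ Icc 1 (u i), ‖b i s‖ ≤ ρ)
    (hlim : ∀ s, 1 ≤ s → Tendsto (fun i => b i s) l (𝓝 0)) :
    Tendsto (fun i => ∑ s ∈ Icc 1 (u i), b i s ^ s) l (𝓝 0) := by
  suffices Tendsto (fun i => ∑' s, (Set.Icc 1 (u i)).indicator (fun s => b i s ^ s) s) l
      (𝓝 (∑' _ : ℕ, (0 : R))) by
    rw [tsum_zero] at this
    refine this.congr fun i => ?_
    rw [sum_eq_tsum_indicator, coe_Icc]
  refine tendsto_tsum_of_dominated_convergence (summable_geometric_of_lt_one hρ0 hρ1)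
    (fun s => ?_) ?_
  · rcases Nat.eq_zero_or_pos s with rfl | hs
    · simpa using tendsto_const_nhds
    · refine squeeze_zero_norm (fun i => norm_indicator_le_norm_self _ _) ?_
      simpa [hs.ne'] using ((hlim s hs).pow s).norm
  · filter_upwards [hbound] with i hi s
    by_cases hs : s ∈ Set.Icc 1 (u i)
    · rw [Set.indicator_of_mem hs]
      exact (norm_pow_le' _ hs.1).trans
        (pow_le_pow_left₀ (norm_nonneg _) (hi s (mem_Icc.2 hs)) s)
    · rw [Set.indicator_of_notMem hs, norm_zero]
      exact pow_nonneg hρ0 s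

lemma mul_div_sub_mul_le_two_mul {c d δ n r s : ℝ} (hc : 0 ≤ c) (hr : 1 ≤ r) (hd : 0 < d)
    (hn : 0 < n) (hs : 0 ≤ s) (hδs : 2 * (δ * s) ≤ d * n) :
    d * s * c / ((d * n - δ * s) * r) ≤ 2 * c * (s / n) := by
  have hhalf : d * n / 2 ≤ d * n - δ * s := by linarith
  have hden : 0 ≤ d * n - δ * s := (by positivity : 0 ≤ d * n / 2).trans hhalf
  calc d * s * c / ((d * n - δ * s) * r) ≤ d * s * c / (d * n / 2 * 1) := by gcongr
    _ = 2 * c * (s / n) := by field_simp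

section Bracket

variable {r : ℕ} {d δ n s : ℝ}

lemma repairBracket_nonneg (hd : 0 ≤ d) (hδ : 0 ≤ δ) (hn : 0 ≤ n) (hs : 0 ≤ s)
    (hδs : δ * s ≤ d * n) : 0 ≤ repairBracket r d δ n s := by
  have := sub_nonneg.2 hδs
  unfold repairBracket
  positivity

lemma two_le_exp_one_mul_mul_factorial (hr : 0 < r) :
    2 ≤ exp 1 * r * (r.factorial : ℝ) := by
  have hr1 : (1 : ℝ) ≤ r := mod_cast hr
  have hfac : (1 : ℝ) ≤ r.factorial := mod_cast r.factorial_pos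
  calc (2 : ℝ) ≤ exp 1 * 1 * 1 := by linarith [exp_one_gt_two]
    _ ≤ exp 1 * r * (r.factorial : ℝ) := by gcongr

lemma repairBracket_le (hr : 0 < r) (hd : 0 < d) (hδ : exp 1 * r * (r.factorial : ℝ) ≤ δ)
    (hn : 0 < n) (hs : 1 ≤ s) (hδs : 2 * (δ * s) ≤ d * n) (hsn : 2 * exp 1 * (s / n) ≤ 1) :
    repairBracket r d δ n s ≤ 4 * exp 1 ^ 3 * (s / n) := by
  have hδ2 : 2 ≤ δ := (two_le_exp_one_mul_mul_factorial hr).trans hδ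
  have hden : 0 < d * n - δ * s := by nlinarith
  have hmiddle : (d * s * exp 1 / ((d * n - δ * s) * r)) ^ δ ≤ (2 * exp 1 * (s / n)) ^ 2 :=
    calc (d * s * exp 1 / ((d * n - δ * s) * r)) ^ δ ≤ (2 * exp 1 * (s / n)) ^ δ :=
          rpow_le_rpow (by positivity)
            (mul_div_sub_mul_le_two_mul (by positivity) (mod_cast hr) hd hn (by positivity) hδs)
            (by positivity)
      _ ≤ (2 * exp 1 * (s / n)) ^ (2 : ℝ) :=
          rpow_le_rpow_of_exponent_ge (by positivity) hsn hδ2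
      _ = (2 * exp 1 * (s / n)) ^ 2 := rpow_two _
  have hlast : (exp 1 * r * (r.factorial : ℝ) / (δ * s)) ^ (δ / r) ≤ 1 := by
    refine rpow_le_one (by positivity) (div_le_one_of_le₀ ?_ (by positivity)) (by positivity)
    exact hδ.trans (le_mul_of_one_le_right (by positivity) hs)
  calc repairBracket r d δ n s ≤ (n * exp 1 / s) * (2 * exp 1 * (s / n)) ^ 2 * 1 := by
        unfold repairBracket
        gcongr
    _ = 4 * exp 1 ^ 3 * (s / n) := by
        field_simp
        ring

lemma abs_repairBracket_le (hr : 0 < r) (hd : 0 < d)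
    (hδ : exp 1 * r * (r.factorial : ℝ) ≤ δ) (hn : 0 < n) (hs : 1 ≤ s)
    (hδs : 2 * (δ * s) ≤ d * n) (hsn : 2 * exp 1 * (s / n) ≤ 1) :
    |repairBracket r d δ n s| ≤ 4 * exp 1 ^ 3 * (s / n) := by
  have hδ2 : 2 ≤ δ := (two_le_exp_one_mul_mul_factorial hr).trans hδ
  rw [abs_of_nonneg (repairBracket_nonneg hd.le (by linarith) hn.le (by linarith) (by nlinarith))]
  exact repairBracket_le hr hd hδ hn hs hδs hsn

lemma tendsto_repairBracket_nhds_zero (hr : 0 < r) (hd : 0 < d)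
    (hδ : exp 1 * r * (r.factorial : ℝ) ≤ δ) (hs : 1 ≤ s) :
    Tendsto (fun n => repairBracket r d δ n s) atTop (𝓝 0) := by
  have hdiv (c : ℝ) : Tendsto (fun n => c * (s / n)) atTop (𝓝 0) := by
    simpa using (tendsto_id.const_div_atTop s).const_mul c
  refine squeeze_zero_norm' ?_ (hdiv (4 * exp 1 ^ 3))
  filter_upwards [eventually_gt_atTop 0,
    (tendsto_id.const_mul_atTop hd).eventually_ge_atTop (2 * (δ * s)),
    (hdiv (2 * exp 1)).eventually_le_const one_pos] with n hn hδs hsn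
  exact abs_repairBracket_le hr hd hδ hn hs hδs hsn

lemma tendsto_sum_repairBracket_pow_nhds_zero {κ : ℝ} (hr : 0 < r) (hd : 0 < d)
    (hδ : exp 1 * r * (r.factorial : ℝ) ≤ δ) (hδκ : 2 * (δ * κ) ≤ d)
    (hκ : 4 * exp 1 ^ 3 * κ ≤ 1 / 2) :
    Tendsto (fun n : ℕ => ∑ s ∈ Icc 1 ⌊κ * n⌋₊, repairBracket r d δ n s ^ s) atTop (𝓝 0) := by
  refine tendsto_sum_Icc_pow_nhds_zero one_half_pos.le one_half_lt_one ?_ fun s hs =>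
    (tendsto_repairBracket_nhds_zero hr hd hδ (mod_cast hs)).comp tendsto_natCast_atTop_atTop
  filter_upwards [eventually_gt_atTop 0] with n hn s hs
  obtain ⟨hs1, hsfloor⟩ := mem_Icc.1 hs
  have hn0 : (0 : ℝ) < n := mod_cast hn
  have hsκ : (s : ℝ) ≤ κ * n := (Nat.le_floor_iff' (by lia)).1 hsfloor
  have hsnκ : (s : ℝ) / n ≤ κ := (div_le_iff₀ hn0).2 hsκ
  have hδ0 : 0 < δ := lt_of_lt_of_le (by positivity) hδ
  have hδs : 2 * (δ * s) ≤ d * n :=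
    calc 2 * (δ * s) ≤ 2 * (δ * (κ * n)) := by gcongr
      _ = 2 * (δ * κ) * n := by ring
      _ ≤ d * n := by gcongr
  have hsn : 4 * exp 1 ^ 3 * ((s : ℝ) / n) ≤ 1 / 2 := le_trans (by gcongr) hκ
  have hexp : 2 * exp 1 ≤ 4 * exp 1 ^ 3 := by
    nlinarith [one_le_pow₀ (one_le_exp zero_le_one) (n := 2), exp_pos 1]
  refine (abs_repairBracket_le hr hd hδ hn0 (mod_cast hs1) hδs ?_).trans hsn
  calc 2 * exp 1 * ((s : ℝ) / n) ≤ 4 * exp 1 ^ 3 * ((s : ℝ) / n) := by gcongr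
    _ ≤ 1 := by linarith

end Bracket

section Delta

variable {ε r : ℝ}

lemma tendsto_div_log_atTop : Tendsto (fun x => x / log x) atTop atTop := by
  refine ((tendsto_exp_div_pow_atTop 1).comp tendsto_log_atTop).congr' ?_
  filter_upwards [eventually_gt_atTop 0] with x hx
  simp [exp_log hx]

lemma isBigO_div_log_id_atTop : (fun x => x / log x) =O[atTop] id := by
  simpa [div_eq_mul_inv] using!
    (isBigO_refl id atTop).mul (tendsto_log_atTop.inv_tendsto_atTop.isBigO_one ℝ)

lemma repairDelta_eq (ε r d : ℝ) :
    repairDelta ε r d = ε / 2 * ((r - 1) / r * (d / log d)) ^ (1 / (r - 1)) := by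
  rw [repairDelta, mul_div_mul_comm]

lemma tendsto_repairDelta_atTop (hε : 0 < ε) (hr : 1 < r) :
    Tendsto (repairDelta ε r) atTop atTop := by
  have hr1 : 0 < r - 1 := sub_pos.2 hr
  have hbase := tendsto_div_log_atTop.const_mul_atTop (div_pos hr1 (one_pos.trans hr))
  exact (((tendsto_rpow_atTop (one_div_pos.2 hr1)).comp hbase).const_mul_atTop
    (half_pos hε)).congr fun d => (repairDelta_eq ε r d).symm

lemma isBigO_repairDelta_id (ε : ℝ) (hr : 2 ≤ r) : repairDelta ε r =O[atTop] id := by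
  have hexp_nonneg : 0 ≤ 1 / (r - 1) := one_div_nonneg.2 (by linarith)
  have hexp_le : 1 / (r - 1) ≤ 1 := (div_le_one (by linarith)).2 (by linarith)
  have hrpow : (fun d : ℝ => d ^ (1 / (r - 1))) =O[atTop] id := by
    refine IsBigO.of_bound' ?_
    filter_upwards [eventually_ge_atTop 1] with d hd
    rw [norm_of_nonneg (by positivity), id, norm_of_nonneg (by positivity)]
    exact rpow_le_self_of_one_le hd hexp_le
  refine (IsBigO.trans ?_ hrpow).congr_left fun d => (repairDelta_eq ε r d).symm
  exact ((isBigO_div_log_id_atTop.const_mul_left _).rpow hexp_nonneg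
    (eventually_ge_atTop 0)).const_mul_left _

end Delta

theorem repair_sum_tendsto_zero_general {r : ℕ} (hr : 0 < r) {δ κ : ℝ → ℝ}
    (hδ : Tendsto δ atTop atTop) (hκ : Tendsto κ atTop (𝓝 0))
    (hδκ : (fun d => δ d * κ d) =o[atTop] id) :
    ∀ᶠ d in atTop, Tendsto
      (fun n : ℕ => ∑ s ∈ Icc 1 ⌊κ d * n⌋₊, repairBracket r d (δ d) n s ^ s) atTop (𝓝 0) := by
  have hκ' : Tendsto (fun d => 4 * exp 1 ^ 3 * κ d) atTop (𝓝 0) := by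
    simpa only [mul_zero] using hκ.const_mul (4 * exp 1 ^ 3)
  filter_upwards [eventually_gt_atTop 0, hδ.eventually_ge_atTop (exp 1 * r * (r.factorial : ℝ)),
    hκ'.eventually_le_const one_half_pos, hδκ.bound one_half_pos] with d hd hδd hκd hδκd
  have hδκd : δ d * κ d ≤ 1 / 2 * d := by
    simpa [abs_of_pos hd] using (le_abs_self _).trans hδκd
  exact tendsto_sum_repairBracket_pow_nhds_zero hr hd hδd (by linarith) hκd

/-- For every integer `r ≥ 3`, `ε > 0` and `K > 0` there is `d₀` such that for every real
`d ≥ d₀`, with `δ = (ε/2)((r−1)d/(r log d))^(1/(r−1))` and `u(n) = ⌊Kn/√d⌋`,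
`Σ_{s=1}^{u} [(ne/s)(dse/((dn−δs)r))^δ (e·r·r!/(δs))^(δ/r)]^s → 0` as `n → ∞`. -/
theorem repair_sum_tendsto_zero (r : ℕ) (hr : 3 ≤ r) (ε : ℝ) (hε : 0 < ε) (K : ℝ)
    (hK : 0 < K) :
    ∃ d₀ : ℝ, ∀ d : ℝ, d₀ ≤ d →
      ∀ δ : ℝ,
        δ = ε / 2 * ((((r : ℝ) - 1) * d / (r * Real.log d)) ^ ((1 : ℝ) / ((r : ℝ) - 1))) →
        Filter.Tendsto
          (fun n : ℕ =>
            ∑ s ∈ Finset.Icc 1 ⌊K * n / d ^ ((1 : ℝ) / 2)⌋₊,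
              (((n : ℝ) * Real.exp 1 / s) *
                  ((d * s * Real.exp 1 / ((d * n - δ * s) * r)) ^ δ) *
                  ((Real.exp 1 * r * (r.factorial : ℝ) / (δ * s)) ^ (δ / r))) ^ s)
          Filter.atTop (nhds 0) := by
  have hr2 : (2 : ℝ) ≤ r := by exact_mod_cast (by lia : 2 ≤ r)
  have hκ : Tendsto (fun d : ℝ => K / d ^ ((1 : ℝ) / 2)) atTop (𝓝 0) :=
    (tendsto_rpow_atTop one_half_pos).const_div_atTop K
  have hδκ : (fun d => repairDelta ε r d * (K / d ^ ((1 : ℝ) / 2))) =o[atTop] id := by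
    simpa using! (isBigO_repairDelta_id ε hr2).mul_isLittleO ((isLittleO_one_iff ℝ).2 hκ)
  obtain ⟨d₀, hd₀⟩ := eventually_atTop.1 (repair_sum_tendsto_zero_general (r := r) (by lia)
    (tendsto_repairDelta_atTop hε (by linarith)) hκ hδκ)
  refine ⟨d₀, fun d hd δ hδ => ?_⟩
  simpa only [hδ, repairBracket, repairDelta, mul_div_right_comm K] using hd₀ d hd
end
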